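/- Let W be a discrete memoryless channel with R_cr < C and let R ∈ (R_cr, C). Suppose W is nonsingular at rate R (i.e., there exists Q with E_r(R,Q) = E_r(R) such that the pair (Q,W) is nonsingular), and define ρ̄*_R := sup{ −∂E_r(a,Q)/∂a|_{a=R} : Q with E_r(R,Q) = E_r(R) and (Q,W) nonsingular }. Then for every ε > 0 there exists a constant K₄ > 0, depending only on W, R and ε, such that for every positive integer N there exists an (N,R) code (f,φ) with maximal error probability P_e(f,φ) ≤ K₄ · N^{−(1+ρ̄*_R−ε)/2} · e^{−N·E_r(R)}. -/

import Mathlib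

open Real BigOperators
open scoped Classical

namespace RCB

/-- A probability distribution on a finite alphabet. -/
def IsDist {α : Type*} [Fintype α] (Q : α → ℝ) : Prop :=
  (∀ a, 0 ≤ Q a) ∧ ∑ a, Q a = 1

/-- A discrete memoryless channel, i.e. a stochastic matrix from `X` to `Y`. -/
def IsChannel {X Y : Type*} [Fintype X] [Fintype Y] (W : X → Y → ℝ) : Prop :=
  (∀ x y, 0 ≤ W x y) ∧ ∀ x, ∑ y, W x y = 1

/-- The Gallager function `E_o(ρ, Q)`. -/
noncomputable def Eo {X Y : Type*} [Fintype X] [Fintype Y]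
    (W : X → Y → ℝ) (ρ : ℝ) (Q : X → ℝ) : ℝ :=
  - Real.log (∑ y, (∑ x, Q x * W x y ^ (1 / (1 + ρ))) ^ (1 + ρ))

/-- The random coding exponent `E_r(R, Q)` for input distribution `Q`. -/
noncomputable def ErQ {X Y : Type*} [Fintype X] [Fintype Y]
    (W : X → Y → ℝ) (R : ℝ) (Q : X → ℝ) : ℝ :=
  sSup ((fun ρ => -ρ * R + Eo W ρ Q) '' Set.Icc (0 : ℝ) 1)

/-- The random coding exponent `E_r(R)`. -/
noncomputable def Er {X Y : Type*} [Fintype X] [Fintype Y]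
    (W : X → Y → ℝ) (R : ℝ) : ℝ :=
  sSup {v : ℝ | ∃ Q : X → ℝ, IsDist Q ∧ v = ErQ W R Q}

/-- The mutual information `I(Q; W)` (natural logarithm). -/
noncomputable def MI {X Y : Type*} [Fintype X] [Fintype Y]
    (W : X → Y → ℝ) (Q : X → ℝ) : ℝ :=
  ∑ x, ∑ y, Q x * W x y * Real.log (W x y / ∑ x', Q x' * W x' y)

/-- The capacity `C = max_Q I(Q;W)`. -/
noncomputable def Capacity {X Y : Type*} [Fintype X] [Fintype Y]
    (W : X → Y → ℝ) : ℝ :=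
  sSup {v : ℝ | ∃ Q : X → ℝ, IsDist Q ∧ v = MI W Q}

/-- The critical rate of the input distribution `Q`:
`R_cr(Q) = ∂E_o(ρ,Q)/∂ρ |_{ρ=1}`. -/
noncomputable def RcrQ {X Y : Type*} [Fintype X] [Fintype Y]
    (W : X → Y → ℝ) (Q : X → ℝ) : ℝ :=
  deriv (fun ρ => Eo W ρ Q) 1

/-- The critical rate of the channel: the largest `R` with
`E_r(R) = -R + max_Q E_o(1,Q)`. -/
noncomputable def Rcr {X Y : Type*} [Fintype X] [Fintype Y]
    (W : X → Y → ℝ) : ℝ :=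
  sSup {R : ℝ | Er W R = -R + sSup {v : ℝ | ∃ Q : X → ℝ, IsDist Q ∧ v = Eo W 1 Q}}

/-- The rate `R_∞ = inf {R ≥ 0 : E_SP(R) < ∞}` (finiteness of the
sphere-packing exponent expressed as boundedness of the family of affine maps). -/
noncomputable def Rinf {X Y : Type*} [Fintype X] [Fintype Y]
    (W : X → Y → ℝ) : ℝ :=
  sInf {R : ℝ | 0 ≤ R ∧
    BddAbove {v : ℝ | ∃ (Q : X → ℝ) (ρ : ℝ), IsDist Q ∧ 0 ≤ ρ ∧ v = -ρ * R + Eo W ρ Q}}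

/-- The pair `(Q, W)` is singular if `W(y|x) = W(y|z)` whenever
`Q(x)W(y|x)Q(z)W(y|z) > 0`. -/
def Singular {X Y : Type*} (W : X → Y → ℝ) (Q : X → ℝ) : Prop :=
  ∀ x y z, 0 < Q x * W x y * (Q z * W z y) → W x y = W z y

/-- `ρ^*_R(Q) = -∂E_r(a,Q)/∂a |_{a=R}`. -/
noncomputable def rhoStarQ {X Y : Type*} [Fintype X] [Fintype Y]
    (W : X → Y → ℝ) (Q : X → ℝ) (R : ℝ) : ℝ :=
  - deriv (fun a => ErQ W a Q) R

/-- The number of messages of an `(N, R)` code: `⌈exp (N R)⌉`. -/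
noncomputable def nMsgs (N : ℕ) (R : ℝ) : ℕ := ⌈Real.exp (N * R)⌉₊

/-- The `N`-fold memoryless extension of the channel `W`. -/
noncomputable def Wn {X Y : Type*} (W : X → Y → ℝ) {N : ℕ}
    (c : Fin N → X) (y : Fin N → Y) : ℝ :=
  ∏ n, W (c n) (y n)

/-- The maximal error probability of the code `(f, φ)` over the `N`-fold
memoryless extension of `W`. -/
noncomputable def Pmax {X Y : Type*} [Fintype X] [Fintype Y] {M N : ℕ}
    (W : X → Y → ℝ) (f : Fin M → Fin N → X) (φ : (Fin N → Y) → Fin M) : ℝ :=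
  ⨆ m : Fin M, ∑ y : Fin N → Y, Wn W (f m) y * (if φ y ≠ m then (1 : ℝ) else 0)

/-- The ensemble average error probability `P̄_e(Q, N, R)`: the `⌈exp (N R)⌉`
codewords are drawn i.i.d. from `Q^N` and decoded by maximum-likelihood
decoding, ties counted as errors. -/
noncomputable def Pbar {X Y : Type*} [Fintype X] [Fintype Y]
    (W : X → Y → ℝ) (Q : X → ℝ) (N : ℕ) (R : ℝ) : ℝ :=
  ∑ c : Fin (nMsgs N R) → Fin N → X,
    (∏ m, ∏ n, Q (c m n)) *
      ((nMsgs N R : ℝ)⁻¹ *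
        ∑ m, ∑ y : Fin N → Y,
          Wn W (c m) y *
            (if ∃ m', m' ≠ m ∧ Wn W (c m) y ≤ Wn W (c m') y then (1 : ℝ) else 0))

/-- The tilted output distribution `f_ρ`. -/
noncomputable def fRho {X Y : Type*} [Fintype X] [Fintype Y]
    (W : X → Y → ℝ) (Q : X → ℝ) (ρ : ℝ) (y : Y) : ℝ :=
  (∑ x, Q x * W x y ^ (1 / (1 + ρ))) ^ (1 + ρ) /
    ∑ b, (∑ a, Q a * W a b ^ (1 / (1 + ρ))) ^ (1 + ρ)

/-- The cumulant generating function
`Λ_ρ(λ) = log E_{P_{X,Y}}[exp(λ log (f_ρ(Y)/W(Y|X)))]` with `P_{X,Y} = Q × W`. -/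
noncomputable def Lam {X Y : Type*} [Fintype X] [Fintype Y]
    (W : X → Y → ℝ) (Q : X → ℝ) (ρ : ℝ) (t : ℝ) : ℝ :=
  Real.log (∑ x, ∑ y, Q x * W x y * Real.exp (t * Real.log (fRho W Q ρ y / W x y)))

/-- `P_{X,Y,Z}(S̃_Q)` where `P_{X,Y,Z}(x,y,z) = Q(x)W(y|x)Q(z)` and
`S̃_Q = {(x,y,z) : Q(x)W(y|x)Q(z)W(y|z) > 0}`. -/
noncomputable def PStilde {X Y : Type*} [Fintype X] [Fintype Y]
    (W : X → Y → ℝ) (Q : X → ℝ) : ℝ :=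
  ∑ x, ∑ y, ∑ z,
    if 0 < Q x * W x y * (Q z * W z y) then Q x * W x y * Q z else 0

/-- The bivariate cumulant generating function `Λ_{1,ρ}(v)` with respect to the
conditional distribution `P̃_{X,Y,Z}` of `P_{X,Y,Z}` given `S̃_Q`. -/
noncomputable def Lam1 {X Y : Type*} [Fintype X] [Fintype Y]
    (W : X → Y → ℝ) (Q : X → ℝ) (ρ : ℝ) (v : ℝ × ℝ) : ℝ :=
  Real.log ((∑ x, ∑ y, ∑ z,
    if 0 < Q x * W x y * (Q z * W z y) then
      Q x * W x y * Q z *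
        Real.exp (v.1 * Real.log (W x y / fRho W Q ρ y) +
          v.2 * Real.log (W z y / W x y))
    else 0) / PStilde W Q)

/-- The subdifferential of `f : ℝ → ℝ` at `R` (for convex `f`). -/
def Subderiv (f : ℝ → ℝ) (R : ℝ) : Set ℝ :=
  {g : ℝ | ∀ x, f R + g * (x - R) ≤ f x}

/-- The tilted backward channel `P^ρ_{X|Y}`. -/
noncomputable def PXgY {X Y : Type*} [Fintype X]
    (W : X → Y → ℝ) (Q : X → ℝ) (ρ : ℝ) (x : X) (y : Y) : ℝ :=
  Q x * W x y ^ (1 / (1 + ρ)) / ∑ a, Q a * W a y ^ (1 / (1 + ρ))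

/-- The tilted joint distribution `P^ρ_{X,Y}(x,y) = P^ρ_{X|Y}(x|y) P^ρ_Y(y)`. -/
noncomputable def PXY {X Y : Type*} [Fintype X] [Fintype Y]
    (W : X → Y → ℝ) (Q : X → ℝ) (ρ : ℝ) (x : X) (y : Y) : ℝ :=
  PXgY W Q ρ x y * fRho W Q ρ y

lemma norm_exp_add_exp_le (α β : ℝ) (h : |α - β| ≤ π) :
    ‖Complex.exp (α * Complex.I) + Complex.exp (β * Complex.I)‖
      ≤ 2 - (α - β) ^ 2 / π ^ 2 := by
  have hx : (α - β) ^ 2 / π ^ 2 ≤ 1 := by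
    rw [div_le_one (by positivity)]
    exact sq_le_sq' (by linarith [(abs_le.mp h).1]) (abs_le.mp h).2
  refine abs_le_of_sq_le_sq' ?_ (by linarith) |>.2
  rw [Complex.sq_norm, Complex.normSq_apply]
  simp only [Complex.add_re, Complex.add_im, Complex.exp_ofReal_mul_I_re,
    Complex.exp_ofReal_mul_I_im]
  have h1 := Real.cos_le_one_sub_mul_cos_sq h
  rw [Real.cos_sub] at h1
  have e : 2 / π ^ 2 * (α - β) ^ 2 = 2 * ((α - β) ^ 2 / π ^ 2) := by ring
  rw [e] at h1
  nlinarith [Real.sin_sq_add_cos_sq α, Real.sin_sq_add_cos_sq β,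
    sq_nonneg ((α - β) ^ 2 / π ^ 2)]

lemma norm_sum_mul_exp_le {Z : Type*} [Fintype Z] {p L : Z → ℝ}
    (hp : ∀ z, 0 ≤ p z) (hp1 : ∑ z, p z ≤ 1) {u v : Z} (huv : u ≠ v) {m t : ℝ} (hm : 0 ≤ m)
    (hu : m ≤ p u) (hv : m ≤ p v) (ht : |t * L u - t * L v| ≤ π) :
    ‖∑ z, (p z : ℂ) * Complex.exp ((t * L z : ℝ) * Complex.I)‖
      ≤ Real.exp (-(m * (t * L u - t * L v) ^ 2 / π ^ 2)) := by
  set r : Z → ℝ := fun z => p z - ((if z = u then m else 0) + if z = v then m else 0) with hr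
  have hr0 : ∀ z, 0 ≤ r z := by
    intro z
    simp only [hr]
    by_cases h1 : z = u
    · subst h1; simp [huv, hu]
    · by_cases h2 : z = v
      · subst h2; simp [huv.symm, hv]
      · simp [h1, h2, hp z]
  have hrs : ∑ z, r z = ∑ z, p z - (m + m) := by
    simp [hr, Finset.sum_sub_distrib, Finset.sum_add_distrib]
  have hsplit : ∑ z, (p z : ℂ) * Complex.exp ((t * L z : ℝ) * Complex.I)
      = ∑ z, (r z : ℂ) * Complex.exp ((t * L z : ℝ) * Complex.I)
        + m * (Complex.exp ((t * L u : ℝ) * Complex.I)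
          + Complex.exp ((t * L v : ℝ) * Complex.I)) := by
    have : ∀ z, (p z : ℂ) = r z + ((if z = u then (m : ℂ) else 0) + if z = v then (m : ℂ) else 0) := by
      intro z
      simp only [hr]
      split_ifs <;> push_cast <;> ring
    simp_rw [this, add_mul, Finset.sum_add_distrib, ite_mul, zero_mul]
    simp only [Finset.sum_ite_eq', Finset.mem_univ, if_true]
    ring
  have h1 : ‖∑ z, (r z : ℂ) * Complex.exp ((t * L z : ℝ) * Complex.I)‖ ≤ ∑ z, r z := by
    refine (norm_sum_le _ _).trans (Finset.sum_le_sum fun z _ => ?_)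
    rw [norm_mul, Complex.norm_exp_ofReal_mul_I, mul_one, Complex.norm_real,
      Real.norm_of_nonneg (hr0 z)]
  have h2 := norm_exp_add_exp_le _ _ ht
  rw [hsplit]
  refine (norm_add_le _ _).trans ?_
  rw [norm_mul, Complex.norm_real, Real.norm_of_nonneg hm]
  have h3 := mul_le_mul_of_nonneg_left h2 hm
  have h4 := Real.add_one_le_exp (-(m * (t * L u - t * L v) ^ 2 / π ^ 2))
  have h5 : m * (2 - (t * L u - t * L v) ^ 2 / π ^ 2)
    = m + m - m * (t * L u - t * L v) ^ 2 / π ^ 2 := by ring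
  linarith

lemma summable_exp_neg_abs_int {c : ℝ} (hc : 0 < c) :
    Summable fun k : ℤ => Real.exp (-(c * |(k : ℝ)|)) := by
  have h : Summable fun n : ℕ => Real.exp (-(c * (n : ℝ))) := by
    have := Real.summable_exp_nat_mul_iff.mpr (show -c < 0 by linarith)
    refine this.congr fun n => ?_
    congr 1; ring
  refine Summable.of_nat_of_neg ?_ ?_
  · simpa using h
  · simpa using h

/-- The characteristic function of a sum of independent variables factors. -/
lemma sum_prod_mul_exp {Z : Type*} [Fintype Z] {N : ℕ} (p L : Fin N → Z → ℝ) (t : ℝ) :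
    ∑ z : Fin N → Z, ((∏ n, p n (z n) : ℝ) : ℂ) *
        Complex.exp ((t * ∑ n, L n (z n) : ℝ) * Complex.I)
      = ∏ n, ∑ x, (p n x : ℂ) * Complex.exp ((t * L n x : ℝ) * Complex.I) := by
  rw [Finset.prod_univ_sum, Fintype.piFinset_univ]
  refine Finset.sum_congr rfl fun z _ => ?_
  rw [Finset.prod_mul_distrib, ← Complex.exp_sum]
  push_cast
  rw [Finset.mul_sum, Finset.sum_mul]

lemma indicator_le_fejer {J : ℕ} (hJ : 0 < J) {θ x : ℝ} (hθ : 0 ≤ θ) (hθJ : θ * J ≤ 1)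
    (hx : |x| ≤ 1) :
    (J * Real.cos 1) ^ 2
      ≤ ‖∑ j ∈ Finset.range J, Complex.exp ((j * θ * x : ℝ) * Complex.I)‖ ^ 2 := by
  have hc : 0 < Real.cos 1 := Real.cos_one_pos
  refine pow_le_pow_left₀ (by positivity) ?_ 2
  refine le_trans ?_ (Complex.re_le_norm _)
  rw [Complex.re_sum]
  simp only [Complex.exp_ofReal_mul_I_re]
  have : ∀ j ∈ Finset.range J, Real.cos 1 ≤ Real.cos (j * θ * x) := by
    intro j hj
    rw [← Real.cos_abs (j * θ * x)]
    refine Real.cos_le_cos_of_nonneg_of_le_pi (abs_nonneg _) (by linarith [Real.pi_gt_three]) ?_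
    have hj' : (j : ℝ) ≤ J := by exact_mod_cast (Finset.mem_range.mp hj).le
    rw [abs_mul, abs_of_nonneg (by positivity)]
    have : j * θ ≤ 1 := le_trans (by nlinarith) hθJ
    exact mul_le_one₀ this (abs_nonneg _) hx
  calc (J : ℝ) * Real.cos 1 = ∑ j ∈ Finset.range J, Real.cos 1 := by simp
    _ ≤ _ := Finset.sum_le_sum this

lemma norm_sq_sum_exp (J : ℕ) (θ x : ℝ) :
    ((‖∑ j ∈ Finset.range J, Complex.exp ((j * θ * x : ℝ) * Complex.I)‖ ^ 2 : ℝ) : ℂ)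
      = ∑ j ∈ Finset.range J, ∑ k ∈ Finset.range J,
          Complex.exp ((((j : ℝ) - k) * θ * x : ℝ) * Complex.I) := by
  rw [← Complex.normSq_eq_norm_sq, ← Complex.mul_conj, map_sum, Finset.sum_mul_sum]
  refine Finset.sum_congr rfl fun j _ => Finset.sum_congr rfl fun k _ => ?_
  rw [← Complex.exp_conj, ← Complex.exp_add]
  congr 1
  simp only [map_mul, Complex.conj_ofReal, Complex.conj_I]
  push_cast
  ring

/-- A concentration function bound: a sum of independent finitely supported random variables,
a positive fraction of which are uniformly nondegenerate, lies in any given interval of length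
two with probability `O(N^{-1/2})`. -/
lemma exists_concentration (Z : Type*) [Fintype Z] {m d η : ℝ} (hm : 0 < m) (hd : 0 < d) (hη : 0 < η) :
    ∃ C : ℝ, 0 < C ∧ ∀ N : ℕ, 0 < N → ∀ p L : Fin N → Z → ℝ,
      (∀ n z, 0 ≤ p n z) → (∀ n, ∑ z, p n z ≤ 1) → ∀ u v : Z, u ≠ v → ∀ G : Finset (Fin N),
      η * N ≤ G.card → (∀ n ∈ G, m ≤ p n u ∧ m ≤ p n v ∧ |L n u - L n v| = d) → ∀ a : ℝ,
      ∑ z : Fin N → Z, (∏ n, p n (z n)) * (if |∑ n, L n (z n) - a| ≤ 1 then 1 else 0)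
        ≤ C / √N := by
  set δ : ℝ := min 1 (1 / d) with hδ
  have hδ0 : 0 < δ := by positivity
  have hδ1 : δ ≤ 1 := min_le_left _ _
  have hδd : δ * d ≤ 1 := by
    have : δ ≤ 1 / d := min_le_right _ _
    rwa [le_div_iff₀ hd] at this
  set κ : ℝ := m * d ^ 2 / π ^ 2 * η * δ ^ 2 / 4 with hκ
  have hκ0 : 0 < κ := by positivity
  set D : ℝ := ∑' k : ℤ, Real.exp (-(κ * |(k : ℝ)|)) with hD
  have hDs := summable_exp_neg_abs_int hκ0
  have hD0 : 0 < D := hDs.tsum_pos (fun _ => (Real.exp_pos _).le) 0 (Real.exp_pos _)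
  have hc : 0 < Real.cos 1 := Real.cos_one_pos
  refine ⟨D / Real.cos 1 ^ 2, by positivity, ?_⟩
  intro N hN p L hp hp1 u v huv G hG hGn a
  have hN0 : (0 : ℝ) < N := by exact_mod_cast hN
  have hN1 : (1 : ℝ) ≤ N := by exact_mod_cast hN
  have hs1 : 1 ≤ √(N : ℝ) := Real.one_le_sqrt.mpr hN1
  set J : ℕ := ⌈√(N : ℝ)⌉₊ with hJ
  have hJ1 : √(N : ℝ) ≤ J := Nat.le_ceil _
  have hJ2 : (J : ℝ) ≤ 2 * √(N : ℝ) := by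
    have := (Nat.ceil_lt_add_one (Real.sqrt_nonneg (N : ℝ))).le
    linarith
  have hJ0 : (0 : ℝ) < J := by linarith
  have hJn : 0 < J := by exact_mod_cast hJ0
  have hJN : (J : ℝ) ^ 2 ≤ 4 * N := by
    have := Real.sq_sqrt hN0.le
    nlinarith
  set θ : ℝ := δ / J with hθ
  have hθ0 : 0 < θ := by positivity
  have hθJ : θ * J = δ := by rw [hθ]; field_simp
  have hw : ∀ z : Fin N → Z, 0 ≤ ∏ n, p n (z n) := fun z => Finset.prod_nonneg fun n _ => hp n _
  -- the characteristic function bound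
  have hphi : ∀ j ∈ Finset.range J, ∀ k ∈ Finset.range J,
      ‖∑ z : Fin N → Z, ((∏ n, p n (z n) : ℝ) : ℂ) *
        Complex.exp ((((j : ℝ) - k) * θ * (∑ n, L n (z n) - a) : ℝ) * Complex.I)‖
        ≤ Real.exp (-(κ * |(((j : ℤ) - k : ℤ) : ℝ)|)) := by
    intro j hj k hk
    set t : ℝ := ((j : ℝ) - k) * θ with ht
    have hjk : |(j : ℝ) - k| ≤ J := by
      have h1 : (j : ℝ) ≤ J := by exact_mod_cast (Finset.mem_range.mp hj).le
      have h2 : (k : ℝ) ≤ J := by exact_mod_cast (Finset.mem_range.mp hk).le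
      have h3 : (0 : ℝ) ≤ j := by positivity
      have h4 : (0 : ℝ) ≤ k := by positivity
      rw [abs_le]; constructor <;> linarith
    have htd : |t| * d ≤ 1 := by
      rw [ht, abs_mul, abs_of_pos hθ0]
      calc |(j : ℝ) - k| * θ * d ≤ J * θ * d := by gcongr
        _ = δ * d := by rw [mul_comm (J : ℝ), hθJ]
        _ ≤ 1 := hδd
    have e1 : ∑ z : Fin N → Z, ((∏ n, p n (z n) : ℝ) : ℂ) *
        Complex.exp ((t * (∑ n, L n (z n) - a) : ℝ) * Complex.I)
        = (∏ n, ∑ x, (p n x : ℂ) * Complex.exp ((t * L n x : ℝ) * Complex.I)) *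
          Complex.exp ((-(t * a) : ℝ) * Complex.I) := by
      rw [← sum_prod_mul_exp, Finset.sum_mul]
      refine Finset.sum_congr rfl fun z _ => ?_
      rw [mul_assoc (Complex.ofReal _), ← Complex.exp_add]
      congr 2
      push_cast
      ring
    rw [e1, norm_mul, Complex.norm_exp_ofReal_mul_I, mul_one, norm_prod]
    have h1 : ∀ n, ‖∑ x, (p n x : ℂ) * Complex.exp ((t * L n x : ℝ) * Complex.I)‖ ≤ 1 := by
      intro n
      refine (norm_sum_le _ _).trans (le_trans (Finset.sum_le_sum fun x _ => ?_) (hp1 n))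
      rw [norm_mul, Complex.norm_exp_ofReal_mul_I, mul_one, Complex.norm_real,
        Real.norm_of_nonneg (hp n x)]
    have h2 : ∀ n ∈ G, ‖∑ x, (p n x : ℂ) * Complex.exp ((t * L n x : ℝ) * Complex.I)‖
        ≤ Real.exp (-(m * (t * d) ^ 2 / π ^ 2)) := by
      intro n hn
      obtain ⟨hu, hv, hd'⟩ := hGn n hn
      have e2 : |t * L n u - t * L n v| = |t| * d := by rw [← mul_sub, abs_mul, hd']
      have e3 : (t * L n u - t * L n v) ^ 2 = (t * d) ^ 2 := by
        rw [← sq_abs, e2, mul_pow, sq_abs, ← mul_pow]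
      have := norm_sum_mul_exp_le (L := L n) (t := t) (hp n) (hp1 n) huv hm.le hu hv
        (by rw [e2]; linarith [Real.pi_gt_three])
      rwa [e3] at this
    have h3 : ∏ n, ‖∑ x, (p n x : ℂ) * Complex.exp ((t * L n x : ℝ) * Complex.I)‖
        ≤ ∏ n ∈ G, ‖∑ x, (p n x : ℂ) * Complex.exp ((t * L n x : ℝ) * Complex.I)‖ := by
      rw [← Finset.prod_mul_prod_compl G]
      refine mul_le_of_le_one_right (Finset.prod_nonneg fun _ _ => norm_nonneg _) ?_
      exact Finset.prod_le_one (fun _ _ => norm_nonneg _) fun n _ => h1 n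
    refine h3.trans ((Finset.prod_le_prod (fun _ _ => norm_nonneg _) h2).trans ?_)
    rw [Finset.prod_const, ← Real.exp_nat_mul]
    refine Real.exp_le_exp.mpr ?_
    have hi : |(((j : ℤ) - k : ℤ) : ℝ)| ≤ ((j : ℝ) - k) ^ 2 := by
      have : |(j : ℤ) - k| ≤ ((j : ℤ) - k) ^ 2 := by
        rw [← sq_abs]
        nlinarith [Int.le_self_sq |(j : ℤ) - k|]
      exact_mod_cast this
    have h4 : κ * ((j : ℝ) - k) ^ 2 ≤ G.card * (m * (t * d) ^ 2 / π ^ 2) := by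
      have h5 : κ * ((j : ℝ) - k) ^ 2
          = (η * δ ^ 2 / 4) * (m * d ^ 2 / π ^ 2 * ((j : ℝ) - k) ^ 2) := by rw [hκ]; ring
      have h6 : G.card * (m * (t * d) ^ 2 / π ^ 2)
          = (G.card * θ ^ 2) * (m * d ^ 2 / π ^ 2 * ((j : ℝ) - k) ^ 2) := by rw [ht]; ring
      rw [h5, h6]
      refine mul_le_mul_of_nonneg_right ?_ (by positivity)
      refine le_trans ?_ (mul_le_mul_of_nonneg_right hG (sq_nonneg θ))
      rw [hθ, div_pow, mul_assoc, mul_div_assoc]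
      refine mul_le_mul_of_nonneg_left ?_ hη.le
      rw [← mul_div_assoc, div_le_div_iff₀ (by norm_num) (by positivity)]
      nlinarith [sq_nonneg δ]
    nlinarith
  -- integrate the kernel
  set S : ℝ := ∑ z : Fin N → Z, (∏ n, p n (z n)) *
    (if |∑ n, L n (z n) - a| ≤ 1 then 1 else 0) with hS
  have hmain : (J * Real.cos 1) ^ 2 * S ≤ J * D := by
    have h1 : (J * Real.cos 1) ^ 2 * S ≤ ∑ z : Fin N → Z, (∏ n, p n (z n)) *
        ‖∑ j ∈ Finset.range J, Complex.exp ((j * θ * (∑ n, L n (z n) - a) : ℝ) * Complex.I)‖ ^ 2 := by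
      rw [hS, Finset.mul_sum]
      refine Finset.sum_le_sum fun z _ => ?_
      rw [mul_left_comm]
      refine mul_le_mul_of_nonneg_left ?_ (hw z)
      split_ifs with h
      · rw [mul_one]
        exact indicator_le_fejer hJn hθ0.le (by rw [hθJ]; exact hδ1) h
      · rw [mul_zero]; positivity
    have h2 : ((∑ z : Fin N → Z, (∏ n, p n (z n)) *
        ‖∑ j ∈ Finset.range J, Complex.exp ((j * θ * (∑ n, L n (z n) - a) : ℝ) * Complex.I)‖ ^ 2 : ℝ) : ℂ)
        = ∑ j ∈ Finset.range J, ∑ k ∈ Finset.range J, ∑ z : Fin N → Z,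
          ((∏ n, p n (z n) : ℝ) : ℂ) *
          Complex.exp ((((j : ℝ) - k) * θ * (∑ n, L n (z n) - a) : ℝ) * Complex.I) := by
      rw [Complex.ofReal_sum]
      simp_rw [Complex.ofReal_mul _ (_ ^ 2), norm_sq_sum_exp, Finset.mul_sum]
      rw [Finset.sum_comm]
      exact Finset.sum_congr rfl fun j _ => Finset.sum_comm
    refine h1.trans ?_
    refine (Real.le_norm_self _).trans ?_
    rw [← Complex.norm_real, h2]
    refine (norm_sum_le _ _).trans ?_
    have h3 : ∀ j ∈ Finset.range J, ‖∑ k ∈ Finset.range J, ∑ z : Fin N → Z,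
          ((∏ n, p n (z n) : ℝ) : ℂ) *
          Complex.exp ((((j : ℝ) - k) * θ * (∑ n, L n (z n) - a) : ℝ) * Complex.I)‖ ≤ D := by
      intro j hj
      refine (norm_sum_le _ _).trans ((Finset.sum_le_sum (hphi j hj)).trans ?_)
      have hinj : Function.Injective fun k : ℕ => (j : ℤ) - k := by
        intro k l h; simpa using h
      have := (hDs.sum_le_tsum ((Finset.range J).map ⟨_, hinj⟩)
        (fun _ _ => (Real.exp_pos _).le))
      rwa [Finset.sum_map] at this
    refine (Finset.sum_le_sum h3).trans ?_
    simp
  have : S ≤ D / Real.cos 1 ^ 2 / J := by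
    rw [div_div, le_div_iff₀ (by positivity)]
    have : J * (S * (Real.cos 1 ^ 2 * J)) ≤ J * D := by
      calc J * (S * (Real.cos 1 ^ 2 * J)) = (J * Real.cos 1) ^ 2 * S := by ring
        _ ≤ _ := hmain
    exact le_of_mul_le_mul_left this hJ0
  refine this.trans ?_
  gcongr

lemma sum_mul_exp_neg_abs_le {Ω : Type*} [Fintype Ω] {w f : Ω → ℝ} (hw : ∀ ω, 0 ≤ w ω) {B : ℝ}
    (hB : ∀ a : ℝ, ∑ ω, w ω * (if |f ω - a| ≤ 1 then 1 else 0) ≤ B) {c : ℝ} (hc : 0 < c) :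
    ∑ ω, w ω * Real.exp (-(c * |f ω|))
      ≤ B * (Real.exp c * ∑' k : ℤ, Real.exp (-(c * |(k : ℝ)|))) := by
  have hs := summable_exp_neg_abs_int hc
  have hB0 : 0 ≤ B := le_trans (Finset.sum_nonneg fun ω _ => by
    have := hw ω; split_ifs <;> simp [this]) (hB 0)
  rw [← Finset.sum_fiberwise_of_maps_to (s := Finset.univ)
    (t := Finset.univ.image fun ω => ⌊f ω⌋) (g := fun ω => ⌊f ω⌋)
    (fun ω h => Finset.mem_image_of_mem _ h)]
  have h1 : ∀ k : ℤ, ∑ ω with ⌊f ω⌋ = k, w ω * Real.exp (-(c * |f ω|))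
      ≤ B * (Real.exp c * Real.exp (-(c * |(k : ℝ)|))) := by
    intro k
    rw [← Real.exp_add]
    have : ∀ ω, ⌊f ω⌋ = k → |f ω - k| ≤ 1 := by
      intro ω h
      have h1 := Int.floor_le (f ω)
      have h2 := Int.lt_floor_add_one (f ω)
      rw [h] at h1 h2
      rw [abs_le]; constructor <;> linarith
    calc ∑ ω with ⌊f ω⌋ = k, w ω * Real.exp (-(c * |f ω|))
        ≤ ∑ ω with ⌊f ω⌋ = k, (w ω * (if |f ω - k| ≤ 1 then 1 else 0)) *
            Real.exp (c + -(c * |(k : ℝ)|)) := by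
          refine Finset.sum_le_sum fun ω h => ?_
          have hk := this ω (Finset.mem_filter.mp h).2
          rw [if_pos hk, mul_one]
          refine mul_le_mul_of_nonneg_left (Real.exp_le_exp.mpr ?_) (hw ω)
          have : |(k : ℝ)| ≤ |f ω| + 1 := by
            have := abs_sub_abs_le_abs_sub (k : ℝ) (f ω)
            rw [abs_sub_comm] at this
            linarith
          nlinarith
      _ = (∑ ω with ⌊f ω⌋ = k, (w ω * (if |f ω - k| ≤ 1 then 1 else 0))) *
            Real.exp (c + -(c * |(k : ℝ)|)) := by rw [Finset.sum_mul]
      _ ≤ B * Real.exp (c + -(c * |(k : ℝ)|)) := by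
          refine mul_le_mul_of_nonneg_right ?_ (Real.exp_pos _).le
          refine le_trans (Finset.sum_le_sum_of_subset_of_nonneg (Finset.subset_univ _) ?_) (hB k)
          intro ω _ _
          have := hw ω
          split_ifs <;> simp [this]
  refine (Finset.sum_le_sum fun k _ => h1 k).trans ?_
  rw [← Finset.mul_sum, ← Finset.mul_sum]
  refine mul_le_mul_of_nonneg_left ?_ hB0
  refine mul_le_mul_of_nonneg_left ?_ (Real.exp_pos _).le
  exact hs.sum_le_tsum _ fun _ _ => (Real.exp_pos _).le

lemma one_sub_pow_le_min {p : ℝ} (h1 : p ≤ 1) (k : ℕ) :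
    1 - (1 - p) ^ k ≤ min 1 (k * p) := by
  refine le_min ?_ ?_
  · linarith [pow_nonneg (sub_nonneg.mpr h1) k]
  · have := one_add_mul_le_pow (a := -p) (by linarith) k
    rw [← sub_eq_add_neg] at this
    linarith

/-- The expected error probability of a message under random coding, ties counted as errors. -/
lemma sum_codebook_error_le {ι A B : Type*} [Fintype ι] [DecidableEq ι] [Fintype A] [Fintype B]
    {P : A → ℝ} (hP : ∀ a, 0 ≤ P a) (hP1 : ∑ a, P a = 1)
    {V : A → B → ℝ} (hV : ∀ a b, 0 ≤ V a b) (i : ι) :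
    ∑ c : ι → A, (∏ m, P (c m)) *
        ∑ y, V (c i) y * (if ∃ m, m ≠ i ∧ V (c i) y ≤ V (c m) y then (1 : ℝ) else 0)
      ≤ ∑ x, P x * ∑ y, V x y *
          min 1 (Fintype.card ι * ∑ z, P z * (if V x y ≤ V z y then 1 else 0)) := by
  rw [← (Equiv.funSplitAt i A).symm.sum_comp, Fintype.sum_prod_type]
  refine Finset.sum_le_sum fun x _ => ?_
  have hprod : ∀ c : {j // j ≠ i} → A,
      ∏ m, P ((Equiv.funSplitAt i A).symm (x, c) m) = P x * ∏ j, P (c j) := by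
    intro c
    rw [Fintype.prod_eq_mul_prod_subtype_ne _ i]
    congr 1
    · simp [Equiv.funSplitAt, Equiv.piSplitAt]
    · refine Finset.prod_congr rfl fun j _ => ?_
      simp [Equiv.funSplitAt, Equiv.piSplitAt, j.2]
  have hi : ∀ c : {j // j ≠ i} → A, (Equiv.funSplitAt i A).symm (x, c) i = x := by
    intro c; simp [Equiv.funSplitAt, Equiv.piSplitAt]
  have hj : ∀ (c : {j // j ≠ i} → A) (j : ι) (h : j ≠ i),
      (Equiv.funSplitAt i A).symm (x, c) j = c ⟨j, h⟩ := by
    intro c j h; simp [Equiv.funSplitAt, Equiv.piSplitAt, h]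
  have hind : ∀ (c : {j // j ≠ i} → A) (y : B),
      (if ∃ m, m ≠ i ∧ V x y ≤ V ((Equiv.funSplitAt i A).symm (x, c) m) y then (1 : ℝ) else 0)
        = 1 - ∏ j, (1 - if V x y ≤ V (c j) y then (1 : ℝ) else 0) := by
    intro c y
    split_ifs with h
    · obtain ⟨m, hm, hle⟩ := h
      rw [hj c m hm] at hle
      rw [Finset.prod_eq_zero (Finset.mem_univ ⟨m, hm⟩) (by simp [hle]), sub_zero]
    · rw [Finset.prod_eq_one, sub_self]
      rintro ⟨m, hm⟩ -
      rw [if_neg, sub_zero]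
      intro hle
      exact h ⟨m, hm, by rwa [hj c m hm]⟩
  simp_rw [hprod, hi, hind]
  have hswap : ∑ c : {j // j ≠ i} → A, P x * (∏ j, P (c j)) *
      ∑ y, V x y * (1 - ∏ j, (1 - if V x y ≤ V (c j) y then (1 : ℝ) else 0))
      = P x * ∑ y, V x y * ∑ c : {j // j ≠ i} → A, (∏ j, P (c j)) *
        (1 - ∏ j, (1 - if V x y ≤ V (c j) y then (1 : ℝ) else 0)) := by
    simp_rw [Finset.mul_sum]
    rw [Finset.sum_comm]
    refine Finset.sum_congr rfl fun y _ => Finset.sum_congr rfl fun c _ => ?_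
    ring
  rw [hswap]
  refine mul_le_mul_of_nonneg_left ?_ (hP x)
  refine Finset.sum_le_sum fun y _ => mul_le_mul_of_nonneg_left ?_ (hV x y)
  set q : ℝ := ∑ z, P z * (if V x y ≤ V z y then 1 else 0) with hq
  have hq0 : 0 ≤ q := Finset.sum_nonneg fun z _ => by
    have := hP z; split_ifs <;> simp [this]
  have hq1 : q ≤ 1 := by
    rw [← hP1]
    refine Finset.sum_le_sum fun z _ => ?_
    have := hP z; split_ifs <;> simp [this]
  have hsum : ∑ c : {j // j ≠ i} → A, (∏ j, P (c j)) *
        (1 - ∏ j, (1 - if V x y ≤ V (c j) y then (1 : ℝ) else 0))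
      = 1 - (1 - q) ^ Fintype.card {j // j ≠ i} := by
    simp_rw [mul_sub, mul_one, ← Finset.prod_mul_distrib]
    rw [Finset.sum_sub_distrib]
    have h1 := Finset.prod_univ_sum (fun _ : {j // j ≠ i} => (Finset.univ : Finset A))
      (fun _ a => P a)
    have h2 := Finset.prod_univ_sum (fun _ : {j // j ≠ i} => (Finset.univ : Finset A))
      (fun _ a => P a * (1 - if V x y ≤ V a y then (1 : ℝ) else 0))
    rw [Fintype.piFinset_univ] at h1 h2
    rw [← h1, ← h2, Finset.prod_const, Finset.prod_const, hP1, one_pow, Finset.card_univ]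
    simp_rw [mul_sub, mul_one, Finset.sum_sub_distrib, hP1, ← hq]
  rw [hsum]
  refine (one_sub_pow_le_min hq1 _).trans ?_
  refine min_le_min le_rfl (mul_le_mul_of_nonneg_right ?_ hq0)
  exact_mod_cast Fintype.card_subtype_le _

/-- Random coding followed by expurgation. -/
lemma exists_code_of_ensemble {A B : Type*} [Fintype A] [Fintype B]
    {P : A → ℝ} (hP : ∀ a, 0 ≤ P a) (hP1 : ∑ a, P a = 1)
    {V : A → B → ℝ} (hV : ∀ a b, 0 ≤ V a b) {M : ℕ} (hM : 0 < M) :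
    ∃ (f : Fin M → A) (φ : B → Fin M), ∀ m,
      ∑ y, V (f m) y * (if φ y ≠ m then (1 : ℝ) else 0)
        ≤ 2 * ∑ x, P x * ∑ y, V x y *
          min 1 ((2 * M : ℝ) * ∑ z, P z * (if V x y ≤ V z y then 1 else 0)) := by
  set β := ∑ x, P x * ∑ y, V x y *
          min 1 ((2 * M : ℝ) * ∑ z, P z * (if V x y ≤ V z y then 1 else 0)) with hβ
  have hβ0 : 0 ≤ β := by
    refine Finset.sum_nonneg fun x _ => mul_nonneg (hP x) (Finset.sum_nonneg fun y _ =>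
      mul_nonneg (hV x y) (le_min zero_le_one (mul_nonneg (by positivity)
        (Finset.sum_nonneg fun z _ => ?_))))
    have := hP z; split_ifs <;> simp [this]
  let e : (Fin (2 * M) → A) → Fin (2 * M) → ℝ := fun c i =>
    ∑ y, V (c i) y * (if ∃ m, m ≠ i ∧ V (c i) y ≤ V (c m) y then (1 : ℝ) else 0)
  have he0 : ∀ c i, 0 ≤ e c i := fun c i => Finset.sum_nonneg fun y _ => by
    have := hV (c i) y; split_ifs <;> simp [this]
  have hw1 : ∑ c : Fin (2 * M) → A, ∏ m, P (c m) = 1 := by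
    have h1 := Finset.prod_univ_sum (fun _ : Fin (2 * M) => (Finset.univ : Finset A))
      (fun _ a => P a)
    rw [Fintype.piFinset_univ] at h1
    rw [← h1]; simp [hP1]
  have havg : ∑ c : Fin (2 * M) → A, (∏ m, P (c m)) * ∑ i, e c i ≤ (2 * M : ℝ) * β := by
    simp_rw [Finset.mul_sum (Finset.univ : Finset (Fin (2 * M)))]
    rw [Finset.sum_comm]
    have : ∀ i : Fin (2 * M), ∑ c : Fin (2 * M) → A, (∏ m, P (c m)) * e c i ≤ β := by
      intro i
      have := sum_codebook_error_le hP hP1 hV i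
      simp only [Fintype.card_fin, Nat.cast_mul, Nat.cast_ofNat] at this
      convert this
    refine (Finset.sum_le_sum fun i _ => this i).trans ?_
    simp
  obtain ⟨c, hc⟩ : ∃ c : Fin (2 * M) → A, ∑ i, e c i ≤ (2 * M : ℝ) * β := by
    by_contra! hcon
    have hpos : ∃ c : Fin (2 * M) → A, 0 < ∏ m, P (c m) := by
      by_contra! h
      have : ∑ c : Fin (2 * M) → A, ∏ m, P (c m) ≤ 0 := Finset.sum_nonpos fun c _ => h c
      linarith
    obtain ⟨c₀, hc₀⟩ := hpos
    have : ∑ c : Fin (2 * M) → A, (∏ m, P (c m)) * ((2 * M : ℝ) * β)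
        < ∑ c : Fin (2 * M) → A, (∏ m, P (c m)) * ∑ i, e c i :=
      Finset.sum_lt_sum
        (fun c _ => mul_le_mul_of_nonneg_left (hcon c).le (Finset.prod_nonneg fun m _ => hP _))
        ⟨c₀, Finset.mem_univ _, mul_lt_mul_of_pos_left (hcon c₀) hc₀⟩
    rw [← Finset.sum_mul, hw1, one_mul] at this
    linarith
  have hcard : M ≤ Fintype.card {i // e c i ≤ 2 * β} := by
    rw [Fintype.card_subtype]
    by_contra! hlt
    have h1 := Finset.card_filter_add_card_filter_not (s := (Finset.univ : Finset (Fin (2 * M))))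
      (fun i => e c i ≤ 2 * β)
    rw [Finset.card_univ, Fintype.card_fin] at h1
    have h2 : M < (Finset.univ.filter fun i => ¬ e c i ≤ 2 * β).card := by omega
    have h3 : ∑ i ∈ Finset.univ.filter (fun i => ¬ e c i ≤ 2 * β), (2 * β)
        < ∑ i ∈ Finset.univ.filter (fun i => ¬ e c i ≤ 2 * β), e c i := by
      refine Finset.sum_lt_sum_of_nonempty (Finset.card_pos.mp (by omega)) fun i hi => ?_
      exact not_le.mp (Finset.mem_filter.mp hi).2
    have h4 : ∑ i ∈ Finset.univ.filter (fun i => ¬ e c i ≤ 2 * β), e c i ≤ ∑ i, e c i :=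
      Finset.sum_le_sum_of_subset_of_nonneg (Finset.subset_univ _) fun i _ _ => he0 c i
    rw [Finset.sum_const, nsmul_eq_mul] at h3
    have h5 : (M : ℝ) ≤ (Finset.univ.filter fun i => ¬ e c i ≤ 2 * β).card := by
      exact_mod_cast h2.le
    nlinarith
  obtain ⟨emb⟩ := Function.Embedding.nonempty_of_card_le
    (α := Fin M) (β := {i // e c i ≤ 2 * β}) (by simpa using hcard)
  let f : Fin M → A := fun m => c (emb m).1
  let φ : B → Fin M := fun y =>
    if h : ∃ m, ∀ m', m' ≠ m → V (f m') y < V (f m) y then h.choose else ⟨0, hM⟩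
  refine ⟨f, φ, fun m => le_trans (Finset.sum_le_sum fun y _ => ?_) (emb m).2⟩
  refine mul_le_mul_of_nonneg_left ?_ (hV _ y)
  by_cases hm : ∃ i, i ≠ (emb m).1 ∧ V (c (emb m).1) y ≤ V (c i) y
  · rw [if_pos hm]; split_ifs <;> norm_num
  · have hbest : ∀ m', m' ≠ m → V (f m') y < V (f m) y := by
      intro m' hne
      by_contra! hle
      exact hm ⟨(emb m').1, fun h => hne (emb.injective (Subtype.ext h)), hle⟩
    have hex : ∃ m, ∀ m', m' ≠ m → V (f m') y < V (f m) y := ⟨m, hbest⟩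
    have hφ : φ y = m := by
      simp only [φ, dif_pos hex]
      by_contra hne
      exact lt_asymm (hbest _ hne) (hex.choose_spec m (Ne.symm hne))
    simp [hφ, hm]

/-- Chernoff bound: an event of positive probability occurs linearly often. -/
lemma sum_prod_mul_count_lt_le {Ω : Type*} [Fintype Ω] {P : Ω → ℝ} (hP : ∀ ω, 0 ≤ P ω)
    (hP1 : ∑ ω, P ω = 1) (E : Ω → Prop) {q : ℝ} (hq : 0 < q)
    (hqE : ∑ ω, P ω * (if E ω then 1 else 0) = q) {N : ℕ} (hN : 0 < N) :
    ∑ ω : Fin N → Ω, (∏ n, P (ω n)) *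
        (if ((Finset.univ.filter fun n => E (ω n)).card : ℝ) < q / 4 * N then 1 else 0)
      ≤ (4 / q) / N := by
  have hN0 : (0 : ℝ) < N := by exact_mod_cast hN
  have h1 : ∀ ω : Fin N → Ω,
      (if ((Finset.univ.filter fun n => E (ω n)).card : ℝ) < q / 4 * N then (1 : ℝ) else 0)
        ≤ ∏ n, Real.exp (q / 4 - if E (ω n) then 1 else 0) := by
    intro ω
    rw [← Real.exp_sum, Finset.sum_sub_distrib, Finset.sum_boole]
    simp only [Finset.sum_const, Finset.card_univ, Fintype.card_fin, nsmul_eq_mul]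
    split_ifs with h
    · rw [Real.one_le_exp_iff]; linarith
    · positivity
  have h2 : ∑ ω : Fin N → Ω, (∏ n, P (ω n)) *
        (if ((Finset.univ.filter fun n => E (ω n)).card : ℝ) < q / 4 * N then 1 else 0)
      ≤ (∑ ω, P ω * Real.exp (q / 4 - if E ω then 1 else 0)) ^ N := by
    have h := Finset.prod_univ_sum (fun _ : Fin N => (Finset.univ : Finset Ω))
      (fun _ ω => P ω * Real.exp (q / 4 - if E ω then 1 else 0))
    rw [Fintype.piFinset_univ, Finset.prod_const, Finset.card_univ, Fintype.card_fin] at h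
    rw [h]
    refine Finset.sum_le_sum fun ω _ => ?_
    rw [Finset.prod_mul_distrib]
    exact mul_le_mul_of_nonneg_left (h1 ω) (Finset.prod_nonneg fun n _ => hP _)
  have h3 : ∑ ω, P ω * Real.exp (q / 4 - if E ω then 1 else 0) ≤ Real.exp (-(q / 4)) := by
    have h4 : ∀ ω, P ω * Real.exp (q / 4 - if E ω then 1 else 0)
        ≤ Real.exp (q / 4) * (P ω - P ω * (if E ω then 1 else 0) / 2) := by
      intro ω
      rw [Real.exp_sub]
      have : (1 : ℝ) / Real.exp 1 ≤ 1 / 2 :=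
        one_div_le_one_div_of_le (by norm_num) (by linarith [Real.add_one_le_exp (1 : ℝ)])
      have hp := hP ω
      have he := Real.exp_pos (q / 4)
      split_ifs
      · have : P ω * (Real.exp (q / 4) / Real.exp 1)
            = (P ω * Real.exp (q / 4)) * (1 / Real.exp 1) := by ring
        rw [this]
        nlinarith [mul_nonneg hp he.le]
      · simp [mul_comm]
    refine (Finset.sum_le_sum fun ω _ => h4 ω).trans ?_
    rw [← Finset.mul_sum, Finset.sum_sub_distrib, hP1, ← Finset.sum_div, hqE]
    have h5 := Real.add_one_le_exp (-(q / 2))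
    calc Real.exp (q / 4) * (1 - q / 2) ≤ Real.exp (q / 4) * Real.exp (-(q / 2)) := by
          refine mul_le_mul_of_nonneg_left (by linarith) (Real.exp_pos _).le
      _ = Real.exp (-(q / 4)) := by rw [← Real.exp_add]; congr 1; ring
  refine h2.trans ((pow_le_pow_left₀ (Finset.sum_nonneg fun ω _ =>
    mul_nonneg (hP ω) (Real.exp_pos _).le) h3 N).trans ?_)
  rw [← Real.exp_nat_mul, mul_neg, Real.exp_neg, div_div, ← one_div,
    div_le_div_iff₀ (Real.exp_pos _) (by positivity)]
  have := Real.add_one_le_exp ((N : ℝ) * (q / 4))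
  linarith

lemma min_one_exp_le {ρ : ℝ} (τ : ℝ) :
    min 1 (Real.exp τ) ≤ Real.exp (ρ * τ) * Real.exp (-(min ρ (1 - ρ) * |τ|)) := by
  rw [← Real.exp_add]
  rcases le_total 0 τ with h | h
  · refine (min_le_left _ _).trans (Real.one_le_exp_iff.mpr ?_)
    rw [abs_of_nonneg h]
    nlinarith [min_le_left ρ (1 - ρ)]
  · refine (min_le_right _ _).trans (Real.exp_le_exp.mpr ?_)
    rw [abs_of_nonpos h]
    nlinarith [min_le_right ρ (1 - ρ)]

/-- Change of measure for the pairwise error probability under random coding. -/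
lemma pairwise_error_le {X Y : Type*} [Fintype X] [Fintype Y] {W : X → Y → ℝ} {Q : X → ℝ}
    (hW : ∀ x y, 0 ≤ W x y) (hQ : ∀ x, 0 ≤ Q x) (s : ℝ) {g : Y → ℝ} {N : ℕ}
    (x : Fin N → X) (y : Fin N → Y) (hg : ∀ n, 0 < g (y n)) (hx : ∀ n, 0 < W (x n) (y n)) :
    ∑ z : Fin N → X, (∏ n, Q (z n)) * (if Wn W x y ≤ Wn W z y then 1 else 0)
      ≤ Real.exp (∑ n, (Real.log (g (y n)) - s * Real.log (W (x n) (y n)))) *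
        ∑ z : Fin N → X, (∏ n, Q (z n) * W (z n) (y n) ^ s / g (y n)) *
          Real.exp (-(s * |∑ n, Real.log (W (z n) (y n)) - ∑ n, Real.log (W (x n) (y n))|)) := by
  rw [Finset.mul_sum]
  refine Finset.sum_le_sum fun z _ => ?_
  have hR : 0 ≤ Real.exp (∑ n, (Real.log (g (y n)) - s * Real.log (W (x n) (y n)))) *
        ((∏ n, Q (z n) * W (z n) (y n) ^ s / g (y n)) *
          Real.exp (-(s * |∑ n, Real.log (W (z n) (y n)) - ∑ n, Real.log (W (x n) (y n))|))) := by
    refine mul_nonneg (Real.exp_pos _).le (mul_nonneg (Finset.prod_nonneg fun n _ => ?_)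
      (Real.exp_pos _).le)
    exact div_nonneg (mul_nonneg (hQ _) (Real.rpow_nonneg (hW _ _) _)) (hg n).le
  split_ifs with h
  swap
  · simpa using hR
  have hxp : 0 < Wn W x y := Finset.prod_pos fun n _ => hx n
  have hzn : ∀ n, W (z n) (y n) ≠ 0 := fun n => by
    have := Finset.prod_ne_zero_iff.mp (hxp.trans_le h).ne'
    exact this n (Finset.mem_univ n)
  have hzp : ∀ n, 0 < W (z n) (y n) := fun n => lt_of_le_of_ne (hW _ _) (hzn n).symm
  have hlog : ∑ n, Real.log (W (x n) (y n)) ≤ ∑ n, Real.log (W (z n) (y n)) := by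
    rw [← Real.log_prod fun n _ => (hx n).ne', ← Real.log_prod fun n _ => hzn n]
    exact Real.log_le_log hxp h
  rw [abs_of_nonneg (by linarith), ← Finset.sum_sub_distrib, Finset.mul_sum,
    ← Finset.sum_neg_distrib, Real.exp_sum, Real.exp_sum, ← Finset.prod_mul_distrib,
    ← Finset.prod_mul_distrib, mul_one]
  refine (Finset.prod_congr rfl fun n _ => ?_).le
  rw [Real.rpow_def_of_pos (hzp n), Real.exp_sub, Real.exp_log (hg n)]
  have e : Real.exp (-(s * (Real.log (W (z n) (y n)) - Real.log (W (x n) (y n)))))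
      = Real.exp (s * Real.log (W (x n) (y n))) / Real.exp (Real.log (W (z n) (y n)) * s) := by
    rw [← Real.exp_sub]; congr 1; ring
  rw [e]
  have := (hg n).ne'
  field_simp

lemma ensemble_bound {X Y : Type*} [Fintype X] [Fintype Y] {W : X → Y → ℝ} (hW : IsChannel W)
    {Q : X → ℝ} (hQ : IsDist Q) {ρ : ℝ} (hρ0 : 0 < ρ) (hρ1 : ρ < 1) {x₁ x₂ : X} {y₀ : Y}
    (hQ1 : 0 < Q x₁) (hQ2 : 0 < Q x₂) (hW1 : 0 < W x₁ y₀) (hW2 : 0 < W x₂ y₀)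
    (hne : W x₁ y₀ ≠ W x₂ y₀) (R : ℝ) :
    ∃ K : ℝ, 0 < K ∧ ∀ N : ℕ, 0 < N → ∀ M : ℝ, 0 ≤ M → M ≤ 4 * Real.exp (N * R) →
      ∑ x : Fin N → X, (∏ n, Q (x n)) * ∑ y : Fin N → Y, Wn W x y *
          min 1 (M * ∑ z : Fin N → X, (∏ n, Q (z n)) * (if Wn W x y ≤ Wn W z y then 1 else 0))
        ≤ K * (N : ℝ) ^ (-(1 + ρ) / 2) * Real.exp (-(N : ℝ) * (-ρ * R + Eo W ρ Q)) := by
  have hx12 : x₁ ≠ x₂ := fun h => hne (by rw [h])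
  set s : ℝ := 1 / (1 + ρ) with hs
  have hs0 : 0 < s := by positivity
  have hsρ : 1 - s * ρ = s := by rw [hs]; field_simp; ring
  set g : Y → ℝ := fun y => ∑ x, Q x * W x y ^ s with hg
  have hterm : ∀ x y, 0 ≤ Q x * W x y ^ s := fun x y =>
    mul_nonneg (hQ.1 x) (Real.rpow_nonneg (hW.1 x y) _)
  have hg0 : ∀ y, 0 ≤ g y := fun y => Finset.sum_nonneg fun x _ => hterm x y
  have hgpos : ∀ x y, 0 < Q x → 0 < W x y → 0 < g y := fun x y h1 h2 =>
    lt_of_lt_of_le (mul_pos h1 (Real.rpow_pos_of_pos h2 _))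
      (Finset.single_le_sum (f := fun x => Q x * W x y ^ s) (fun x _ => hterm x y)
        (Finset.mem_univ x))
  have hgy0 : 0 < g y₀ := hgpos x₁ y₀ hQ1 hW1
  set S : ℝ := ∑ y, g y ^ (1 + ρ) with hS
  have hS0 : 0 < S := lt_of_lt_of_le (Real.rpow_pos_of_pos hgy0 (1 + ρ))
    (Finset.single_le_sum (f := fun y => g y ^ (1 + ρ)) (fun y _ => Real.rpow_nonneg (hg0 y) _)
      (Finset.mem_univ y₀))
  set P : X × Y → ℝ := fun ω => Q ω.1 * W ω.1 ω.2 ^ s * g ω.2 ^ ρ / S with hP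
  have hP0 : ∀ ω, 0 ≤ P ω := fun ω =>
    div_nonneg (mul_nonneg (hterm _ _) (Real.rpow_nonneg (hg0 _) _)) hS0.le
  have hP1 : ∑ ω, P ω = 1 := by
    rw [hP, ← Finset.sum_div, Fintype.sum_prod_type_right]
    have : ∀ y, ∑ x, Q x * W x y ^ s * g y ^ ρ = g y ^ (1 + ρ) := fun y => by
      rw [← Finset.sum_mul, Real.rpow_one_add' (hg0 y) (by positivity)]
    simp only [this]
    exact div_self hS0.ne'
  have hPpos : ∀ x y, 0 < Q x → 0 < W x y → 0 < P (x, y) := fun x y h1 h2 =>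
    div_pos (mul_pos (mul_pos h1 (Real.rpow_pos_of_pos h2 _))
      (Real.rpow_pos_of_pos (hgpos x y h1 h2) _)) hS0
  set q : ℝ := ∑ ω, P ω * (if ω.2 = y₀ then 1 else 0) with hq
  have hq0 : 0 < q := by
    refine Finset.sum_pos' (fun ω _ => ?_) ⟨(x₁, y₀), Finset.mem_univ _, ?_⟩
    · have := hP0 ω; split_ifs <;> simp [this]
    · simpa using hPpos x₁ y₀ hQ1 hW1
  set t : X × Y → ℝ := fun ω => Real.log (g ω.2) - s * Real.log (W ω.1 ω.2) with ht
  have hlogne : 0 < |Real.log (W x₁ y₀) - Real.log (W x₂ y₀)| := by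
    rw [abs_pos, sub_ne_zero]
    exact fun h => hne (Real.log_injOn_pos hW1 hW2 h)
  set d : ℝ := |Real.log (W x₁ y₀) - Real.log (W x₂ y₀)| with hd
  -- concentration of the codeword metric given the output
  set p : Y → X → ℝ := fun y x => Q x * W x y ^ s / g y with hp
  have hp0 : ∀ y x, 0 ≤ p y x := fun y x => div_nonneg (hterm x y) (hg0 y)
  have hp1 : ∀ y, ∑ x, p y x ≤ 1 := fun y => by
    rw [hp, ← Finset.sum_div]; exact div_self_le_one _
  have hm1 : 0 < min (p y₀ x₁) (p y₀ x₂) :=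
    lt_min (div_pos (mul_pos hQ1 (Real.rpow_pos_of_pos hW1 _)) hgy0)
      (div_pos (mul_pos hQ2 (Real.rpow_pos_of_pos hW2 _)) hgy0)
  obtain ⟨C₁, hC₁, hconc₁⟩ := exists_concentration X hm1 hlogne (η := q / 4) (by positivity)
  -- concentration of the tilted information density
  have hm2 : 0 < min (P (x₁, y₀)) (P (x₂, y₀)) :=
    lt_min (hPpos _ _ hQ1 hW1) (hPpos _ _ hQ2 hW2)
  obtain ⟨C₂, hC₂, hconc₂⟩ := exists_concentration (X × Y) hm2 (mul_pos hs0 hlogne)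
    (η := 1) one_pos
  set c : ℝ := min ρ (1 - ρ) with hc
  have hc0 : 0 < c := lt_min hρ0 (by linarith)
  have htsum : ∀ {c : ℝ}, 0 < c → 0 < ∑' k : ℤ, Real.exp (-(c * |(k : ℝ)|)) := fun hc =>
    (summable_exp_neg_abs_int hc).tsum_pos (fun _ => (Real.exp_pos _).le) 0 (Real.exp_pos _)
  set κ₁ : ℝ := C₁ * (Real.exp s * ∑' k : ℤ, Real.exp (-(s * |(k : ℝ)|))) with hκ₁
  set κ₂ : ℝ := C₂ * (Real.exp c * ∑' k : ℤ, Real.exp (-(c * |(k : ℝ)|))) with hκ₂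
  have hκ₁0 : 0 < κ₁ := mul_pos hC₁ (mul_pos (Real.exp_pos _) (htsum hs0))
  have hκ₂0 : 0 < κ₂ := mul_pos hC₂ (mul_pos (Real.exp_pos _) (htsum hc0))
  refine ⟨(4 * κ₁) ^ ρ * κ₂ + 4 ^ ρ * (4 / q), by positivity, ?_⟩
  intro N hN M hM0 hM
  have hN0 : (0 : ℝ) < N := by exact_mod_cast hN
  have hN1 : (1 : ℝ) ≤ N := by exact_mod_cast hN
  have hsN : 0 < √(N : ℝ) := Real.sqrt_pos.mpr hN0
  let bad : (Fin N → X × Y) → Prop := fun ω =>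
    ((Finset.univ.filter fun n => (ω n).2 = y₀).card : ℝ) < q / 4 * N
  set a : ℝ := 4 * κ₁ / √N with ha
  have ha0 : 0 < a := by positivity
  set b : ℝ := -(Real.log a + N * R) with hb
  -- the two sums over the tilted measure
  have hsum₂ : ∑ ω : Fin N → X × Y, (∏ n, P (ω n)) * Real.exp (-(c * |∑ n, t (ω n) - b|))
      ≤ κ₂ / √N := by
    have h := sum_mul_exp_neg_abs_le (w := fun ω : Fin N → X × Y => ∏ n, P (ω n))
      (f := fun ω => ∑ n, t (ω n) - b) (fun ω => Finset.prod_nonneg fun n _ => hP0 _)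
      (B := C₂ / √N) (fun a' => ?_) hc0
    · rw [hκ₂]
      calc _ ≤ _ := h
        _ = _ := by ring
    · have := hconc₂ N hN (fun _ => P) (fun _ => t) (fun _ => hP0) (fun _ => hP1.le)
        (x₁, y₀) (x₂, y₀) (by simp [hx12]) Finset.univ (by simp) (fun n _ => ?_) (b + a')
      · simpa only [sub_sub] using this
      · refine ⟨min_le_left _ _, min_le_right _ _, ?_⟩
        simp only [ht]
        rw [sub_sub_sub_cancel_left, ← mul_sub, abs_mul, abs_of_pos hs0, abs_sub_comm]
  have hbadsum : ∑ ω : Fin N → X × Y, (∏ n, P (ω n)) * (if bad ω then 1 else 0)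
      ≤ (4 / q) / N :=
    sum_prod_mul_count_lt_le hP0 hP1 (fun ω => ω.2 = y₀) hq0 rfl hN
  -- pointwise bound
  have hpt : ∀ ω : Fin N → X × Y,
      (∏ n, Q (ω n).1) * (Wn W (fun n => (ω n).1) (fun n => (ω n).2) *
        min 1 (M * ∑ z : Fin N → X, (∏ n, Q (z n)) *
          (if Wn W (fun n => (ω n).1) (fun n => (ω n).2) ≤ Wn W z (fun n => (ω n).2)
            then 1 else 0)))
      ≤ Real.exp (ρ * (N * R)) * S ^ N *
        (a ^ ρ * ((∏ n, P (ω n)) * Real.exp (-(c * |∑ n, t (ω n) - b|)))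
          + 4 ^ ρ * ((∏ n, P (ω n)) * (if bad ω then 1 else 0))) := by
    intro ω
    have hPω : 0 ≤ ∏ n, P (ω n) := Finset.prod_nonneg fun n _ => hP0 _
    have hi : (0 : ℝ) ≤ if bad ω then 1 else 0 := by split_ifs <;> norm_num
    by_cases hz : ∃ n, Q (ω n).1 * W (ω n).1 (ω n).2 = 0
    · obtain ⟨n, hn⟩ := hz
      have h0 : (∏ n, Q (ω n).1) * Wn W (fun n => (ω n).1) (fun n => (ω n).2) = 0 := by
        rw [Wn, ← Finset.prod_mul_distrib]
        exact Finset.prod_eq_zero (Finset.mem_univ n) hn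
      rw [← mul_assoc, h0, zero_mul]
      positivity
    push Not at hz
    have hQp : ∀ n, 0 < Q (ω n).1 := fun n =>
      lt_of_le_of_ne (hQ.1 _) (left_ne_zero_of_mul (hz n)).symm
    have hWp : ∀ n, 0 < W (ω n).1 (ω n).2 := fun n =>
      lt_of_le_of_ne (hW.1 _ _) (right_ne_zero_of_mul (hz n)).symm
    have hgp : ∀ n, 0 < g (ω n).2 := fun n => hgpos _ _ (hQp n) (hWp n)
    set π' := ∑ z : Fin N → X, (∏ n, Q (z n)) *
          (if Wn W (fun n => (ω n).1) (fun n => (ω n).2) ≤ Wn W z (fun n => (ω n).2)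
            then (1 : ℝ) else 0) with hπ'
    set T := ∑ n, t (ω n) with hT
    set F := ∑ z : Fin N → X, (∏ n, p (ω n).2 (z n)) *
          Real.exp (-(s * |∑ n, Real.log (W (z n) (ω n).2)
            - ∑ n, Real.log (W (ω n).1 (ω n).2)|)) with hF
    have hpair : π' ≤ Real.exp T * F :=
      pairwise_error_le hW.1 hQ.1 s (fun n => (ω n).1) (fun n => (ω n).2) hgp hWp
    have hweight : (∏ n, Q (ω n).1) * Wn W (fun n => (ω n).1) (fun n => (ω n).2) *
        Real.exp (ρ * T) = S ^ N * ∏ n, P (ω n) := by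
      have : S ^ N = ∏ _n : Fin N, S := by simp
      rw [this, hT, Finset.mul_sum, Real.exp_sum, Wn, ← Finset.prod_mul_distrib,
        ← Finset.prod_mul_distrib, ← Finset.prod_mul_distrib]
      refine Finset.prod_congr rfl fun n _ => ?_
      simp only [hP, ht]
      rw [mul_div_cancel₀ _ hS0.ne', Real.rpow_def_of_pos (hWp n), Real.rpow_def_of_pos (hgp n)]
      have e : W (ω n).1 (ω n).2 = Real.exp (Real.log (W (ω n).1 (ω n).2)) :=
        (Real.exp_log (hWp n)).symm
      rw [mul_assoc, mul_assoc]
      congr 1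
      nth_rewrite 1 [e]
      rw [← Real.exp_add, ← Real.exp_add]
      congr 1
      have : Real.log (W (ω n).1 (ω n).2) * s
        = Real.log (W (ω n).1 (ω n).2) * (1 - s * ρ) := by rw [hsρ]
      rw [this]; ring
    have hQW0 : 0 ≤ (∏ n, Q (ω n).1) * Wn W (fun n => (ω n).1) (fun n => (ω n).2) :=
      mul_nonneg (Finset.prod_nonneg fun n _ => hQ.1 _) (Finset.prod_nonneg fun n _ => hW.1 _ _)
    rw [← mul_assoc]
    by_cases hbad : bad ω
    · have hF1 : F ≤ 1 := by
        have h1 : F ≤ ∑ z : Fin N → X, ∏ n, p (ω n).2 (z n) := by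
          refine Finset.sum_le_sum fun z _ => mul_le_of_le_one_right
            (Finset.prod_nonneg fun n _ => hp0 _ _) (Real.exp_le_one_iff.mpr ?_)
          rw [neg_nonpos]; positivity
        refine h1.trans ?_
        have h := Finset.prod_univ_sum (fun _ : Fin N => (Finset.univ : Finset X))
          (fun n x => p (ω n).2 x)
        rw [Fintype.piFinset_univ] at h
        rw [← h]
        exact Finset.prod_le_one (fun n _ => Finset.sum_nonneg fun x _ => hp0 _ _)
          fun n _ => hp1 _
      have hτ : M * π' ≤ Real.exp (Real.log 4 + N * R + T) := by
        rw [Real.exp_add, Real.exp_add, Real.exp_log (by norm_num)]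
        calc M * π' ≤ M * (Real.exp T * F) := mul_le_mul_of_nonneg_left hpair hM0
          _ ≤ M * (Real.exp T * 1) := by gcongr
          _ ≤ _ := by rw [mul_one]; gcongr
      have hmin : min 1 (M * π') ≤ 4 ^ ρ * Real.exp (ρ * (N * R)) * Real.exp (ρ * T) := by
        refine (min_le_min le_rfl hτ).trans ((min_one_exp_le (ρ := ρ) _).trans ?_)
        refine (mul_le_of_le_one_right (Real.exp_pos _).le (Real.exp_le_one_iff.mpr ?_)).trans ?_
        · rw [neg_nonpos]; exact mul_nonneg hc0.le (abs_nonneg _)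
        · rw [Real.rpow_def_of_pos (by norm_num : (0 : ℝ) < 4), ← Real.exp_add, ← Real.exp_add]
          exact (congrArg Real.exp (by ring)).le
      rw [if_pos hbad, mul_one]
      calc _ ≤ (∏ n, Q (ω n).1) * Wn W (fun n => (ω n).1) (fun n => (ω n).2) *
            (4 ^ ρ * Real.exp (ρ * (N * R)) * Real.exp (ρ * T)) :=
            mul_le_mul_of_nonneg_left hmin hQW0
        _ = Real.exp (ρ * (N * R)) * 4 ^ ρ *
            ((∏ n, Q (ω n).1) * Wn W (fun n => (ω n).1) (fun n => (ω n).2) *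
              Real.exp (ρ * T)) := by ring
        _ = Real.exp (ρ * (N * R)) * S ^ N * (4 ^ ρ * ∏ n, P (ω n)) := by rw [hweight]; ring
        _ ≤ _ := by
            refine mul_le_mul_of_nonneg_left (le_add_of_nonneg_left ?_) (by positivity)
            positivity
    · have hF1 : F ≤ κ₁ / √N := by
        have h := sum_mul_exp_neg_abs_le (w := fun z : Fin N → X => ∏ n, p (ω n).2 (z n))
          (f := fun z => ∑ n, Real.log (W (z n) (ω n).2) - ∑ n, Real.log (W (ω n).1 (ω n).2))
          (fun z => Finset.prod_nonneg fun n _ => hp0 _ _)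
          (B := C₁ / √N) (fun a' => ?_) hs0
        · rw [hκ₁]
          calc _ ≤ _ := h
            _ = _ := by ring
        · have := hconc₁ N hN (fun n => p (ω n).2) (fun n x => Real.log (W x (ω n).2))
            (fun n => hp0 _) (fun n => hp1 _) x₁ x₂ hx12
            (Finset.univ.filter fun n => (ω n).2 = y₀) (not_lt.mp hbad) (fun n hn => ?_)
            (∑ n, Real.log (W (ω n).1 (ω n).2) + a')
          · simpa only [sub_sub] using this
          · have hn' := (Finset.mem_filter.mp hn).2
            rw [hn']
            exact ⟨min_le_left _ _, min_le_right _ _, rfl⟩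
      have hτ : M * π' ≤ Real.exp (T - b) := by
        have e : Real.exp (T - b) = Real.exp T * (a * Real.exp (N * R)) := by
          rw [hb, sub_neg_eq_add, Real.exp_add, Real.exp_add, Real.exp_log ha0]
        rw [e, ha]
        calc M * π' ≤ M * (Real.exp T * F) := mul_le_mul_of_nonneg_left hpair hM0
          _ ≤ M * (Real.exp T * (κ₁ / √N)) := by gcongr
          _ ≤ 4 * Real.exp (N * R) * (Real.exp T * (κ₁ / √N)) := by gcongr
          _ = _ := by ring
      have hmin : min 1 (M * π') ≤ a ^ ρ * Real.exp (ρ * (N * R)) * Real.exp (ρ * T) *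
          Real.exp (-(c * |T - b|)) := by
        refine (min_le_min le_rfl hτ).trans ((min_one_exp_le (ρ := ρ) _).trans ?_)
        refine mul_le_mul_of_nonneg_right ?_ (Real.exp_pos _).le
        rw [Real.rpow_def_of_pos ha0, ← Real.exp_add, ← Real.exp_add, hb]
        exact (congrArg Real.exp (by ring)).le
      calc _ ≤ (∏ n, Q (ω n).1) * Wn W (fun n => (ω n).1) (fun n => (ω n).2) *
            (a ^ ρ * Real.exp (ρ * (N * R)) * Real.exp (ρ * T) * Real.exp (-(c * |T - b|))) :=
            mul_le_mul_of_nonneg_left hmin hQW0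
        _ = Real.exp (ρ * (N * R)) * a ^ ρ *
            ((∏ n, Q (ω n).1) * Wn W (fun n => (ω n).1) (fun n => (ω n).2) *
              Real.exp (ρ * T)) * Real.exp (-(c * |T - b|)) := by ring
        _ = Real.exp (ρ * (N * R)) * S ^ N *
            (a ^ ρ * ((∏ n, P (ω n)) * Real.exp (-(c * |T - b|)))) := by rw [hweight]; ring
        _ ≤ _ := by
            refine mul_le_mul_of_nonneg_left (le_add_of_nonneg_right ?_) (by positivity)
            positivity
  -- sum up
  have hlhs : ∑ x : Fin N → X, (∏ n, Q (x n)) * ∑ y : Fin N → Y, Wn W x y *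
          min 1 (M * ∑ z : Fin N → X, (∏ n, Q (z n)) * (if Wn W x y ≤ Wn W z y then 1 else 0))
      = ∑ ω : Fin N → X × Y,
        (∏ n, Q (ω n).1) * (Wn W (fun n => (ω n).1) (fun n => (ω n).2) *
        min 1 (M * ∑ z : Fin N → X, (∏ n, Q (z n)) *
          (if Wn W (fun n => (ω n).1) (fun n => (ω n).2) ≤ Wn W z (fun n => (ω n).2)
            then 1 else 0))) := by
    rw [← (Equiv.arrowProdEquivProdArrow (Fin N) (fun _ => X) (fun _ => Y)).symm.sum_comp,
      Fintype.sum_prod_type]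
    refine Finset.sum_congr rfl fun x _ => ?_
    rw [Finset.mul_sum]
    rfl
  rw [hlhs]
  refine (Finset.sum_le_sum fun ω _ => hpt ω).trans ?_
  rw [← Finset.mul_sum, Finset.sum_add_distrib, ← Finset.mul_sum, ← Finset.mul_sum]
  have hexp : Real.exp (ρ * (N * R)) * S ^ N
      = Real.exp (-(N : ℝ) * (-ρ * R + Eo W ρ Q)) := by
    have : Eo W ρ Q = -Real.log S := rfl
    rw [this, ← Real.exp_log (pow_pos hS0 N), Real.log_pow, ← Real.exp_add]
    congr 1
    ring
  rw [hexp, mul_comm]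
  refine mul_le_mul_of_nonneg_right ?_ (Real.exp_pos _).le
  have hpow : a ^ ρ * (κ₂ / √N) = (4 * κ₁) ^ ρ * κ₂ * (N : ℝ) ^ (-(1 + ρ) / 2) := by
    have : (N : ℝ) ^ (-(1 + ρ) / 2) = (√(N : ℝ) ^ ρ * √N)⁻¹ := by
      rw [Real.sqrt_eq_rpow, ← Real.rpow_mul hN0.le, ← Real.rpow_add hN0, ← Real.rpow_neg hN0.le]
      congr 1; ring
    rw [this, ha, Real.div_rpow (by positivity) hsN.le]
    have := (Real.rpow_pos_of_pos hsN ρ).ne'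
    field_simp
  have hinv : 1 / (N : ℝ) ≤ (N : ℝ) ^ (-(1 + ρ) / 2) := by
    rw [one_div, ← Real.rpow_neg_one]
    exact Real.rpow_le_rpow_of_exponent_le hN1 (by linarith)
  calc _ ≤ a ^ ρ * (κ₂ / √N) + 4 ^ ρ * ((4 / q) / N) := by gcongr
    _ = (4 * κ₁) ^ ρ * κ₂ * (N : ℝ) ^ (-(1 + ρ) / 2) + 4 ^ ρ * (4 / q) * (1 / N) := by
        rw [hpow]; ring
    _ ≤ (4 * κ₁) ^ ρ * κ₂ * (N : ℝ) ^ (-(1 + ρ) / 2)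
        + 4 ^ ρ * (4 / q) * (N : ℝ) ^ (-(1 + ρ) / 2) := by gcongr
    _ = _ := by ring

section Exponent

variable {X Y : Type*} [Fintype X] [Fintype Y] {W : X → Y → ℝ} {Q : X → ℝ}

lemma IsChannel.le_one (hW : IsChannel W) (x : X) (y : Y) : W x y ≤ 1 := by
  rw [← hW.2 x]
  exact Finset.single_le_sum (fun y _ => hW.1 x y) (Finset.mem_univ y)

lemma sum_output_eq_one (hW : IsChannel W) (hQ : IsDist Q) : ∑ y, ∑ x, Q x * W x y = 1 := by
  rw [Finset.sum_comm]
  simp_rw [← Finset.mul_sum, hW.2, mul_one, hQ.2]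

lemma Eo_zero (hW : IsChannel W) (hQ : IsDist Q) : Eo W 0 Q = 0 := by
  simp [Eo, sum_output_eq_one hW hQ]

lemma inv_card_le_sum_rpow (hW : IsChannel W) (hQ : IsDist Q) {ρ : ℝ} (h0 : 0 ≤ ρ) (h1 : ρ ≤ 1) :
    (Fintype.card Y : ℝ)⁻¹ ≤ ∑ y, (∑ x, Q x * W x y ^ (1 / (1 + ρ))) ^ (1 + ρ) := by
  have hq0 : ∀ y, 0 ≤ ∑ x, Q x * W x y := fun y =>
    Finset.sum_nonneg fun x _ => mul_nonneg (hQ.1 x) (hW.1 x y)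
  have hq1 : ∀ y, ∑ x, Q x * W x y ≤ 1 := fun y => by
    rw [← sum_output_eq_one hW hQ]
    exact Finset.single_le_sum (fun y _ => hq0 y) (Finset.mem_univ y)
  have h2 : ∀ y, (∑ x, Q x * W x y) ^ 2 ≤ (∑ x, Q x * W x y ^ (1 / (1 + ρ))) ^ (1 + ρ) := by
    intro y
    have h3 : ∑ x, Q x * W x y ≤ ∑ x, Q x * W x y ^ (1 / (1 + ρ)) := by
      refine Finset.sum_le_sum fun x _ => mul_le_mul_of_nonneg_left ?_ (hQ.1 x)
      refine Real.self_le_rpow_of_le_one (hW.1 x y) (hW.le_one x y) ?_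
      rw [div_le_one (by linarith)]; linarith
    refine le_trans ?_ (Real.rpow_le_rpow (hq0 y) h3 (by linarith))
    rw [← Real.rpow_natCast]
    exact Real.rpow_le_rpow_of_exponent_ge' (hq0 y) (hq1 y) (by linarith)
      (by push_cast; linarith)
  refine le_trans ?_ (Finset.sum_le_sum fun y _ => h2 y)
  have h4 := sq_sum_le_card_mul_sum_sq (s := (Finset.univ : Finset Y))
    (f := fun y => ∑ x, Q x * W x y)
  rw [sum_output_eq_one hW hQ, one_pow, Finset.card_univ] at h4
  have hc : (0 : ℝ) < Fintype.card Y := by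
    by_contra! h
    have : 0 ≤ ∑ y, (∑ x, Q x * W x y) ^ 2 := Finset.sum_nonneg fun _ _ => sq_nonneg _
    nlinarith
  rwa [inv_le_iff_one_le_mul₀' hc]

lemma card_output_pos (hW : IsChannel W) (hQ : IsDist Q) : (0 : ℝ) < Fintype.card Y := by
  have : Nonempty Y := by
    by_contra h
    rw [not_nonempty_iff] at h
    simpa using sum_output_eq_one hW hQ
  exact_mod_cast Fintype.card_pos

lemma sum_rpow_pos (hW : IsChannel W) (hQ : IsDist Q) {ρ : ℝ} (h0 : 0 ≤ ρ) (h1 : ρ ≤ 1) :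
    0 < ∑ y, (∑ x, Q x * W x y ^ (1 / (1 + ρ))) ^ (1 + ρ) :=
  lt_of_lt_of_le (inv_pos.mpr (card_output_pos hW hQ)) (inv_card_le_sum_rpow hW hQ h0 h1)

lemma Eo_le_log_card (hW : IsChannel W) (hQ : IsDist Q) {ρ : ℝ} (h0 : 0 ≤ ρ) (h1 : ρ ≤ 1) :
    Eo W ρ Q ≤ Real.log (Fintype.card Y) := by
  have := Real.log_le_log (inv_pos.mpr (card_output_pos hW hQ)) (inv_card_le_sum_rpow hW hQ h0 h1)
  rw [Real.log_inv] at this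
  rw [Eo]
  linarith

lemma continuousOn_Eo (hW : IsChannel W) (hQ : IsDist Q) :
    ContinuousOn (fun ρ => Eo W ρ Q) (Set.Icc 0 1) := by
  refine ContinuousOn.neg (ContinuousOn.log ?_ fun ρ hρ => (sum_rpow_pos hW hQ hρ.1 hρ.2).ne')
  have hne : ∀ ρ ∈ Set.Icc (0 : ℝ) 1, (1 + ρ) ≠ 0 := fun ρ hρ => by linarith [hρ.1]
  have hexp : ContinuousOn (fun ρ : ℝ => 1 / (1 + ρ)) (Set.Icc 0 1) :=
    continuousOn_const.div (by fun_prop) hne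
  refine continuousOn_finsetSum _ fun y _ => ContinuousOn.rpow ?_ (by fun_prop)
    fun ρ hρ => Or.inr (by linarith [hρ.1])
  refine continuousOn_finsetSum _ fun x _ => continuousOn_const.mul ?_
  exact continuousOn_const.rpow hexp fun ρ hρ =>
    Or.inr (one_div_pos.mpr (by linarith [hρ.1]))

lemma le_ErQ (hW : IsChannel W) (hQ : IsDist Q) (R : ℝ) {ρ : ℝ} (hρ : ρ ∈ Set.Icc (0 : ℝ) 1) :
    -ρ * R + Eo W ρ Q ≤ ErQ W R Q := by
  refine le_csSup ?_ (Set.mem_image_of_mem _ hρ)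
  exact (isCompact_Icc.image_of_continuousOn
    (ContinuousOn.add (by fun_prop) (continuousOn_Eo hW hQ))).bddAbove

lemma exists_ErQ_eq (hW : IsChannel W) (hQ : IsDist Q) (R : ℝ) :
    ∃ ρ ∈ Set.Icc (0 : ℝ) 1, ErQ W R Q = -ρ * R + Eo W ρ Q := by
  have hc : ContinuousOn (fun ρ => -ρ * R + Eo W ρ Q) (Set.Icc 0 1) :=
    ContinuousOn.add (by fun_prop) (continuousOn_Eo hW hQ)
  obtain ⟨ρ, hρ, h⟩ := (isCompact_Icc.image_of_continuousOn hc).sSup_mem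
    ((Set.nonempty_Icc.mpr zero_le_one).image _)
  exact ⟨ρ, hρ, h.symm⟩

lemma ErQ_nonneg (hW : IsChannel W) (hQ : IsDist Q) (R : ℝ) : 0 ≤ ErQ W R Q := by
  have := le_ErQ hW hQ R (ρ := 0) (by simp)
  simpa [Eo_zero hW hQ] using this

lemma ErQ_le_Er (hW : IsChannel W) (hQ : IsDist Q) (R : ℝ) : ErQ W R Q ≤ Er W R := by
  refine le_csSup ⟨|R| + Real.log (Fintype.card Y), ?_⟩ ⟨Q, hQ, rfl⟩
  rintro _ ⟨Q', hQ', rfl⟩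
  obtain ⟨ρ, hρ, h⟩ := exists_ErQ_eq hW hQ' R
  rw [h]
  have := Eo_le_log_card hW hQ' hρ.1 hρ.2
  have h2 : -ρ * R ≤ |R| := by
    calc -ρ * R ≤ |-ρ * R| := le_abs_self _
      _ = ρ * |R| := by rw [abs_mul, abs_neg, abs_of_nonneg hρ.1]
      _ ≤ |R| := mul_le_of_le_one_left (abs_nonneg _) hρ.2
  linarith

lemma Er_nonneg (hW : IsChannel W) (R : ℝ) : 0 ≤ Er W R := by
  refine Real.sSup_nonneg ?_
  rintro _ ⟨Q, hQ, rfl⟩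
  exact ErQ_nonneg hW hQ R

/-- Above the critical rate, `ρ = 1` does not attain the random coding exponent. -/
lemma Er_ne_of_Rcr_lt (hW : IsChannel W) (hQ : IsDist Q) {R : ℝ} (hR : Rcr W < R) :
    Er W R ≠ -1 * R + Eo W 1 Q := by
  intro h
  have hb : BddAbove {v : ℝ | ∃ Q : X → ℝ, IsDist Q ∧ v = Eo W 1 Q} := by
    refine ⟨Real.log (Fintype.card Y), ?_⟩
    rintro _ ⟨Q', hQ', rfl⟩
    exact Eo_le_log_card hW hQ' zero_le_one le_rfl
  have h1 : Eo W 1 Q ≤ sSup {v : ℝ | ∃ Q : X → ℝ, IsDist Q ∧ v = Eo W 1 Q} :=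
    le_csSup hb ⟨Q, hQ, rfl⟩
  have h2 : sSup {v : ℝ | ∃ Q : X → ℝ, IsDist Q ∧ v = Eo W 1 Q} ≤ Er W R + R := by
    refine csSup_le ⟨_, Q, hQ, rfl⟩ ?_
    rintro _ ⟨Q', hQ', rfl⟩
    have := (le_ErQ hW hQ' R (ρ := 1) (by simp)).trans (ErQ_le_Er hW hQ' R)
    linarith
  refine absurd (le_csSup ?_ (show R ∈ {R : ℝ | Er W R
    = -R + sSup {v : ℝ | ∃ Q : X → ℝ, IsDist Q ∧ v = Eo W 1 Q}} by
      simp only [Set.mem_ofPred_eq]; linarith)) (not_le.mpr hR)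
  refine ⟨sSup {v : ℝ | ∃ Q : X → ℝ, IsDist Q ∧ v = Eo W 1 Q}, fun R' hR' => ?_⟩
  have := Er_nonneg hW R'
  rw [Set.mem_ofPred_eq] at hR'
  linarith

lemma hasDerivAt_rpow_one_div {w : ℝ} (hw : 0 ≤ w) :
    HasDerivAt (fun ρ : ℝ => w ^ (1 / (1 + ρ))) (-(w * Real.log w)) 0 := by
  rcases hw.eq_or_lt with rfl | hw
  · have : (fun ρ : ℝ => (0 : ℝ) ^ (1 / (1 + ρ))) =ᶠ[nhds 0] fun _ => 0 := by
      filter_upwards [lt_mem_nhds (show (-1 : ℝ) < 0 by norm_num)] with ρ hρ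
      exact Real.zero_rpow (one_div_pos.mpr (by linarith)).ne'
    simpa using (hasDerivAt_const (0 : ℝ) (0 : ℝ)).congr_of_eventuallyEq this
  · have h1 : HasDerivAt (fun ρ : ℝ => 1 / (1 + ρ)) (-1) 0 := by
      have := ((hasDerivAt_id' (0 : ℝ)).const_add 1).fun_inv (by norm_num)
      simpa using this
    have := h1.const_rpow hw
    simpa [mul_comm] using this

lemma hasDerivAt_Eo_zero (hW : IsChannel W) (hQ : IsDist Q) :
    HasDerivAt (fun ρ => Eo W ρ Q) (MI W Q) 0 := by
  have hg : ∀ y, HasDerivAt (fun ρ : ℝ => ∑ x, Q x * W x y ^ (1 / (1 + ρ)))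
      (∑ x, Q x * (-(W x y * Real.log (W x y)))) 0 := fun y =>
    HasDerivAt.fun_sum fun x _ => (hasDerivAt_rpow_one_div (hW.1 x y)).const_mul (Q x)
  have hterm : ∀ y, HasDerivAt (fun ρ : ℝ => (∑ x, Q x * W x y ^ (1 / (1 + ρ))) ^ (1 + ρ))
      (-∑ x, Q x * W x y * Real.log (W x y / ∑ x', Q x' * W x' y)) 0 := by
    intro y
    by_cases hz : ∀ x, Q x * W x y = 0
    · have : (fun ρ : ℝ => (∑ x, Q x * W x y ^ (1 / (1 + ρ))) ^ (1 + ρ)) =ᶠ[nhds 0]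
          fun _ => 0 := by
        filter_upwards [lt_mem_nhds (show (-1 : ℝ) < 0 by norm_num)] with ρ hρ
        have h1 : ∀ x, Q x * W x y ^ (1 / (1 + ρ)) = 0 := by
          intro x
          rcases mul_eq_zero.mp (hz x) with h | h
          · rw [h, zero_mul]
          · rw [h, Real.zero_rpow (one_div_pos.mpr (by linarith)).ne', mul_zero]
        rw [Finset.sum_eq_zero fun x _ => h1 x, Real.zero_rpow (by linarith)]
      have h2 := (hasDerivAt_const (0 : ℝ) (0 : ℝ)).congr_of_eventuallyEq this
      simpa [hz] using h2
    · push Not at hz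
      obtain ⟨x₀, hx₀⟩ := hz
      have hpos : 0 < ∑ x, Q x * W x y :=
        Finset.sum_pos' (fun x _ => mul_nonneg (hQ.1 x) (hW.1 x y)) ⟨x₀, Finset.mem_univ _,
          lt_of_le_of_ne (mul_nonneg (hQ.1 x₀) (hW.1 x₀ y)) hx₀.symm⟩
      refine ((hg y).rpow ((hasDerivAt_id' (0 : ℝ)).const_add 1)
        (by simpa using hpos)).congr_deriv ?_
      simp only [add_zero, div_one, Real.rpow_one, mul_one, sub_self, Real.rpow_zero, one_mul]
      rw [Finset.sum_mul, ← Finset.sum_add_distrib, ← Finset.sum_neg_distrib]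
      refine Finset.sum_congr rfl fun x _ => ?_
      rcases eq_or_ne (W x y) 0 with h0 | h0
      · simp [h0]
      · rw [Real.log_div h0 hpos.ne']; ring
  have hS : HasDerivAt (fun ρ : ℝ => ∑ y, (∑ x, Q x * W x y ^ (1 / (1 + ρ))) ^ (1 + ρ))
      (-MI W Q) 0 := by
    refine (HasDerivAt.fun_sum fun y (_ : y ∈ Finset.univ) => hterm y).congr_deriv ?_
    rw [MI, Finset.sum_comm, Finset.sum_neg_distrib]
  refine (hS.log (sum_rpow_pos hW hQ le_rfl zero_le_one).ne').neg.congr_deriv ?_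
  simp [sum_output_eq_one hW hQ]

lemma Er_pos_of_lt_capacity [Nonempty X] (hW : IsChannel W) {R : ℝ} (hR : R < Capacity W) :
    0 < Er W R := by
  have hne : {v : ℝ | ∃ Q : X → ℝ, IsDist Q ∧ v = MI W Q}.Nonempty := by
    refine ⟨_, Pi.single (Classical.arbitrary X) 1, ⟨fun x => ?_, ?_⟩, rfl⟩
    · rw [Pi.single_apply]; split_ifs <;> norm_num
    · simp
  obtain ⟨_, ⟨Q, hQ, rfl⟩, hlt⟩ := exists_lt_of_lt_csSup hne hR
  have hd : HasDerivAt (fun ρ => -ρ * R + Eo W ρ Q) (-1 * R + MI W Q) 0 :=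
    ((hasDerivAt_id (0 : ℝ)).neg.mul_const R).add (hasDerivAt_Eo_zero hW hQ)
  by_contra! hle
  have hmax : IsLocalMaxOn (fun ρ => -ρ * R + Eo W ρ Q) (Set.Icc 0 1) 0 := by
    filter_upwards [self_mem_nhdsWithin] with ρ hρ
    simpa [Eo_zero hW hQ] using ((le_ErQ hW hQ R hρ).trans (ErQ_le_Er hW hQ R)).trans hle
  have h1 := hmax.hasFDerivWithinAt_nonpos hd.hasFDerivAt.hasFDerivWithinAt
    (y := 1) (mem_posTangentConeAt_of_segment_subset (by simp [segment_eq_Icc]))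
  simp at h1
  linarith

/-- A maximizing `ρ` in the definition of `E_r(R, Q)` is at least `-∂E_r(R, Q)/∂R`. -/
lemma rhoStarQ_le (hW : IsChannel W) (hQ : IsDist Q) {R ρ : ℝ} (hρ : ρ ∈ Set.Icc (0 : ℝ) 1)
    (h : ErQ W R Q = -ρ * R + Eo W ρ Q) : rhoStarQ W Q R ≤ ρ := by
  by_cases hd : DifferentiableAt ℝ (fun a => ErQ W a Q) R
  · have hmin : IsLocalMin (fun a => ErQ W a Q + a * ρ) R := by
      refine Filter.Eventually.of_forall fun a => ?_
      have := le_ErQ hW hQ a hρ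
      simp only [h]
      linarith
    have := hmin.hasDerivAt_eq_zero (hd.hasDerivAt.add ((hasDerivAt_id R).mul_const ρ))
    rw [rhoStarQ]
    linarith
  · rw [rhoStarQ, deriv_zero_of_not_differentiableAt hd, neg_zero]
    exact hρ.1

end Exponent

lemma nMsgs_le {N : ℕ} {R : ℝ} (hR : 0 ≤ R) : (nMsgs N R : ℝ) ≤ 2 * Real.exp (N * R) := by
  have h1 : (1 : ℝ) ≤ Real.exp (N * R) := Real.one_le_exp (by positivity)
  have := (Nat.ceil_lt_add_one (Real.exp_pos (N * R)).le).le
  rw [nMsgs]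
  linarith

lemma nMsgs_pos (N : ℕ) (R : ℝ) : 0 < nMsgs N R := Nat.ceil_pos.mpr (Real.exp_pos _)

lemma nMsgs_eq_one {N : ℕ} {R : ℝ} (hR : R ≤ 0) : nMsgs N R = 1 := by
  refine le_antisymm (Nat.ceil_le.mpr ?_) (nMsgs_pos N R)
  simpa using mul_nonpos_of_nonneg_of_nonpos (Nat.cast_nonneg N) hR

/-- Existence of good codes from an input distribution that separates two inputs at a common
output letter. -/
lemma exists_code_Pmax_le {X Y : Type*} [Fintype X] [Fintype Y] {W : X → Y → ℝ}
    (hW : IsChannel W) {Q : X → ℝ} (hQ : IsDist Q) (hns : ¬ Singular W Q) {ρ : ℝ}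
    (hρ0 : 0 < ρ) (hρ1 : ρ < 1) (R : ℝ) :
    ∃ K : ℝ, 0 < K ∧ ∀ N : ℕ, 0 < N →
      ∃ (f : Fin (nMsgs N R) → Fin N → X) (φ : (Fin N → Y) → Fin (nMsgs N R)),
        Pmax W f φ
          ≤ K * (N : ℝ) ^ (-(1 + ρ) / 2) * Real.exp (-(N : ℝ) * (-ρ * R + Eo W ρ Q)) := by
  simp only [Singular, not_forall] at hns
  obtain ⟨x₁, y₀, x₂, hpos, hne⟩ := hns
  have hQ1 : 0 < Q x₁ := lt_of_le_of_ne (hQ.1 _) fun h => by simp [← h] at hpos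
  have hQ2 : 0 < Q x₂ := lt_of_le_of_ne (hQ.1 _) fun h => by simp [← h] at hpos
  have hW1 : 0 < W x₁ y₀ := lt_of_le_of_ne (hW.1 _ _) fun h => by simp [← h] at hpos
  have hW2 : 0 < W x₂ y₀ := lt_of_le_of_ne (hW.1 _ _) fun h => by simp [← h] at hpos
  obtain ⟨K, hK, hbound⟩ := ensemble_bound hW hQ hρ0 hρ1 hQ1 hQ2 hW1 hW2 hne R
  refine ⟨2 * K, by positivity, fun N hN => ?_⟩
  have : Nonempty (Fin (nMsgs N R)) := ⟨⟨0, nMsgs_pos N R⟩⟩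
  rcases le_or_gt R 0 with hR | hR
  · have hsub : Subsingleton (Fin (nMsgs N R)) := by
      rw [nMsgs_eq_one hR]; infer_instance
    refine ⟨fun _ _ => x₁, fun _ => ⟨0, nMsgs_pos N R⟩, ciSup_le fun m => ?_⟩
    rw [Finset.sum_eq_zero]
    · positivity
    · intro y _
      rw [if_neg (not_not.mpr (Subsingleton.elim _ _)), mul_zero]
  · have hP1 : ∑ x : Fin N → X, ∏ n, Q (x n) = 1 := by
      have h := Finset.prod_univ_sum (fun _ : Fin N => (Finset.univ : Finset X)) (fun _ x => Q x)
      rw [Fintype.piFinset_univ] at h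
      rw [← h]
      simp [hQ.2]
    obtain ⟨f, φ, hfφ⟩ := exists_code_of_ensemble (P := fun x : Fin N → X => ∏ n, Q (x n))
      (V := fun x (y : Fin N → Y) => Wn W x y)
      (fun x => Finset.prod_nonneg fun n _ => hQ.1 _) hP1
      (fun x y => Finset.prod_nonneg fun n _ => hW.1 _ _) (nMsgs_pos N R)
    refine ⟨f, φ, ciSup_le fun m => (hfφ m).trans ?_⟩
    have := hbound N hN (2 * nMsgs N R) (by positivity) (by linarith [nMsgs_le (N := N) hR.le])
    rw [mul_assoc, mul_assoc]
    refine mul_le_mul_of_nonneg_left (this.trans_eq (by ring)) zero_le_two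

/-- If `W` is nonsingular at rate `R ∈ (R_cr, C)`, then for every `ε > 0` there
is an `(N,R)` code with maximal error probability at most
`K₄ · N^{-(1+ρ̄*_R-ε)/2} · exp(-N E_r(R))`. -/
theorem statement5 {X Y : Type*} [Fintype X] [Fintype Y] [Nonempty X] [Nonempty Y]
    (W : X → Y → ℝ) (hW : IsChannel W) (hcr : Rcr W < Capacity W)
    (R : ℝ) (hR1 : Rcr W < R) (hR2 : R < Capacity W)
    (hns : ∃ Q : X → ℝ, IsDist Q ∧ ErQ W R Q = Er W R ∧ ¬ Singular W Q)
    (ρbar : ℝ)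
    (hρbar : ρbar = sSup {v : ℝ | ∃ Q : X → ℝ,
      IsDist Q ∧ ErQ W R Q = Er W R ∧ ¬ Singular W Q ∧ v = rhoStarQ W Q R}) :
    ∀ ε : ℝ, 0 < ε → ∃ K : ℝ, 0 < K ∧ ∀ N : ℕ, 0 < N →
      ∃ (f : Fin (nMsgs N R) → Fin N → X) (φ : (Fin N → Y) → Fin (nMsgs N R)),
        Pmax W f φ ≤
          K * (N : ℝ) ^ (-(1 + ρbar - ε) / 2) * Real.exp (-(N : ℝ) * Er W R) := by
  intro ε hε
  obtain ⟨Q₀, hQ₀, hE₀, hns₀⟩ := hns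
  obtain ⟨_, ⟨Q, hQ, hE, hnsQ, rfl⟩, hlt⟩ := exists_lt_of_lt_csSup
    (s := {v : ℝ | ∃ Q : X → ℝ,
      IsDist Q ∧ ErQ W R Q = Er W R ∧ ¬ Singular W Q ∧ v = rhoStarQ W Q R})
    ⟨_, Q₀, hQ₀, hE₀, hns₀, rfl⟩ (show ρbar - ε < _ by rw [← hρbar]; linarith)
  obtain ⟨ρ, hρ, hmax⟩ := exists_ErQ_eq hW hQ R
  have hle := rhoStarQ_le hW hQ hρ hmax
  have hρ0 : 0 < ρ := by
    refine lt_of_le_of_ne hρ.1 ?_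
    rintro rfl
    have := Er_pos_of_lt_capacity hW hR2
    rw [← hE, hmax, Eo_zero hW hQ] at this
    simp at this
  have hρ1 : ρ < 1 := by
    refine lt_of_le_of_ne hρ.2 ?_
    rintro rfl
    exact Er_ne_of_Rcr_lt hW hQ hR1 (hE.symm.trans hmax)
  obtain ⟨K, hK, hcode⟩ := exists_code_Pmax_le hW hQ hnsQ hρ0 hρ1 R
  refine ⟨K, hK, fun N hN => ?_⟩
  obtain ⟨f, φ, hfφ⟩ := hcode N hN
  refine ⟨f, φ, hfφ.trans ?_⟩
  rw [← hmax, hE]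
  have hN1 : (1 : ℝ) ≤ N := by exact_mod_cast hN
  gcongr
  linarith

end RCB
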